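/- arXiv:2605.23229 — 2 statements merged into one kernel-verified Lean document; each statement's English description precedes it below -/
import Mathlib

section
/- Let d ≥ 1 be an integer and a > −1. For every t ≠ 0 and every u₀ ∈ 𝒮(ℝ^{d+1}_+), the integral 𝕊_a(t)u₀(X) := ∫_{ℝ^{d+1}_+} 𝕊_a(X,Y,t) u₀(Y) dω_a(Y) converges absolutely for every X ∈ ℝ^{d+1}_+, and conservation of mass holds: ‖𝕊_a(t)u₀‖_{L²_a(ℝ^{d+1}_+)} = ‖u₀‖_{L²_a(ℝ^{d+1}_+)}. -/
open MeasureTheory Filter Complex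
open scoped ENNReal NNReal Topology

noncomputable section

/-- Bessel function of the first kind of order `ν`, via its power series. -/
def besselJ (ν : ℝ) (x : ℝ) : ℝ :=
  ∑' k : ℕ, ((-1 : ℝ) ^ k / ((k.factorial : ℝ) * Real.Gamma ((k : ℝ) + ν + 1))) *
    (x / 2) ^ (2 * (k : ℝ) + ν)

/-- The half-line Schrödinger–Bessel kernel `S_a(z,ζ,t)`. -/
def SaK (a : ℝ) (z ζ t : ℝ) : ℂ :=
  (Complex.exp (-Complex.I * ((Real.sign t : ℝ) : ℂ) * (((a + 1) * Real.pi / 4 : ℝ) : ℂ)) /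
      (((2 * |t|) ^ ((a + 1) / 2) : ℝ) : ℂ)) *
    (((z * ζ / (2 * |t|)) ^ ((1 - a) / 2) : ℝ) : ℂ) *
    ((besselJ ((a - 1) / 2) (z * ζ / (2 * |t|)) : ℝ) : ℂ) *
    Complex.exp (Complex.I * ((z ^ 2 + ζ ^ 2 : ℝ) : ℂ) / ((4 * t : ℝ) : ℂ))

/-- The boundary kernel `S_a(z,0,t)`. -/
def Sa0 (a : ℝ) (z t : ℝ) : ℂ :=
  ((((2 : ℝ) ^ (-a) / Real.Gamma ((a + 1) / 2) : ℝ)) : ℂ) *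
    Complex.exp (-Complex.I * ((Real.sign t : ℝ) : ℂ) * (((a + 1) * Real.pi / 4 : ℝ) : ℂ)) *
    (((|t| ^ (-((a + 1) / 2)) : ℝ)) : ℂ) *
    Complex.exp (Complex.I * ((z ^ 2 : ℝ) : ℂ) / ((4 * t : ℝ) : ℂ))

/-- The free Schrödinger kernel on `ℝ^d` (principal branch of the power). -/
def Sfree (d : ℕ) (x y : Fin d → ℝ) (t : ℝ) : ℂ :=
  (4 * (Real.pi : ℂ) * Complex.I * (t : ℂ)) ^ (-(d : ℂ) / 2) *
    Complex.exp (Complex.I * ((∑ i, (x i - y i) ^ 2 : ℝ) : ℂ) / ((4 * t : ℝ) : ℂ))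

/-- The full half-space kernel `𝕊_a(X,Y,t) = S_a(z,ζ,t)·S(x,y,t)`. -/
def SK (d : ℕ) (a : ℝ) (X Y : (Fin d → ℝ) × ℝ) (t : ℝ) : ℂ :=
  SaK a X.2 Y.2 t * Sfree d X.1 Y.1 t

/-- The weighted measure `dω_a = z^a dx dz` on the half-space `ℝ^d × (0,∞)`. -/
def ωa (d : ℕ) (a : ℝ) : Measure ((Fin d → ℝ) × ℝ) :=
  (volume : Measure (Fin d → ℝ)).prod
    (((volume : Measure ℝ).restrict (Set.Ioi 0)).withDensity fun z => ENNReal.ofReal (z ^ a))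

/-- The mixed norm `‖Φ‖_{L^q_t L^r_x}`. -/
def mixNorm (d : ℕ) (q r : ℝ) (Φ : (Fin d → ℝ) → ℝ → ℂ) : ℝ≥0∞ :=
  (∫⁻ t : ℝ, (∫⁻ x : Fin d → ℝ, (‖Φ x t‖₊ : ℝ≥0∞) ^ r) ^ (q / r)) ^ (1 / q)

/-- The mixed norm `‖Φ‖_{L^q_T L^r_x}` over the time interval `[0,T]`. -/
def mixNormT (d : ℕ) (T q r : ℝ) (Φ : (Fin d → ℝ) → ℝ → ℂ) : ℝ≥0∞ :=
  (∫⁻ t in Set.Ioc (0 : ℝ) T, (∫⁻ x : Fin d → ℝ, (‖Φ x t‖₊ : ℝ≥0∞) ^ r) ^ (q / r)) ^ (1 / q)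

/-- The homogeneous propagator `𝕋_a^*(u₀)`. -/
def Tstar (d : ℕ) (a : ℝ) (u₀ : (Fin d → ℝ) × ℝ → ℂ) (X : (Fin d → ℝ) × ℝ) (t : ℝ) : ℂ :=
  if t = 0 then u₀ X else ∫ Y, SK d a X Y t * u₀ Y ∂(ωa d a)

/-- The inhomogeneous Duhamel term `𝔻_a(F)`. -/
def Dop (d : ℕ) (a : ℝ) (F : (Fin d → ℝ) × ℝ → ℝ → ℂ) (X : (Fin d → ℝ) × ℝ) (t : ℝ) : ℂ :=
  ∫ τ in (0 : ℝ)..t, ∫ Y, SK d a X Y (t - τ) * F Y τ ∂(ωa d a)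

/-- The boundary-data operator `Θ_a^*(Φ)`. -/
def ThetaStar (d : ℕ) (a : ℝ) (Φ : (Fin d → ℝ) → ℝ → ℂ) (X : (Fin d → ℝ) × ℝ) (t : ℝ) : ℂ :=
  Complex.I *
    ∫ τ in (0 : ℝ)..t, ∫ y : Fin d → ℝ, Sa0 a X.2 (t - τ) * Sfree d X.1 y (t - τ) * Φ y τ

/-- The weight `k(z) = min{1, z^{a/2}}`. -/
def kwt (a z : ℝ) : ℝ := min 1 (z ^ (a / 2))

/-- The weight `k^{-1}(z) = max{1, z^{-a/2}}`. -/
def kinv (a z : ℝ) : ℝ := max 1 (z ^ (-a / 2))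

def bF (ν s : ℝ) : ℝ := ∑' k : ℕ, (-1 : ℝ) ^ k / ((k.factorial : ℝ) * Real.Gamma ((k : ℝ) + ν + 1)) * s ^ k

lemma gamma_pos' {ν : ℝ} (hν : -1 < ν) (k : ℕ) : 0 < Real.Gamma ((k : ℝ) + ν + 1) := by
  apply Real.Gamma_pos_of_pos
  have : (0:ℝ) ≤ k := Nat.cast_nonneg k
  linarith

lemma gamma_inv_bound {ν : ℝ} (hν : -1 < ν) :
    ∃ C : ℝ, 0 < C ∧ ∀ k : ℕ, (Real.Gamma ((k : ℝ) + ν + 1))⁻¹ ≤ C := by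
  have h1 : ∀ k : ℕ, Real.Gamma (ν + 2) ≤ Real.Gamma (((k + 1 : ℕ) : ℝ) + ν + 1) := by
    intro k
    induction k with
    | zero => apply le_of_eq; congr 1; push_cast; ring
    | succ k ih =>
      have h2 : Real.Gamma (((k + 1 + 1 : ℕ) : ℝ) + ν + 1)
          = (((k + 1 : ℕ) : ℝ) + ν + 1) * Real.Gamma (((k + 1 : ℕ) : ℝ) + ν + 1) := by
        rw [← Real.Gamma_add_one]
        · congr 1; push_cast; ring
        · push_cast
          have : (0:ℝ) ≤ k := Nat.cast_nonneg k
          linarith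
      have h3 := gamma_pos' hν (k + 1)
      have : (0:ℝ) ≤ k := Nat.cast_nonneg k
      rw [h2]
      have h4 : (1:ℝ) ≤ (((k + 1 : ℕ) : ℝ) + ν + 1) := by push_cast; linarith
      nlinarith
  have hp1 : 0 < Real.Gamma (ν + 1) := Real.Gamma_pos_of_pos (by linarith)
  have hp2 : 0 < Real.Gamma (ν + 2) := Real.Gamma_pos_of_pos (by linarith)
  refine ⟨(Real.Gamma (ν + 1))⁻¹ + (Real.Gamma (ν + 2))⁻¹, by positivity, ?_⟩
  intro k
  cases k with
  | zero =>
    have : (0:ℝ) ≤ (Real.Gamma (ν + 2))⁻¹ := by positivity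
    simp only [Nat.cast_zero, zero_add]; linarith
  | succ k =>
    have h0 : (0:ℝ) ≤ (Real.Gamma (ν + 1))⁻¹ := by positivity
    have := inv_anti₀ hp2 (h1 k)
    linarith

lemma bF_term_bound {ν : ℝ} (hν : -1 < ν) :
    ∃ C : ℝ, 0 < C ∧ ∀ k : ℕ, ∀ s : ℝ,
      |(-1 : ℝ) ^ k / ((k.factorial : ℝ) * Real.Gamma ((k : ℝ) + ν + 1)) * s ^ k|
        ≤ C * (|s| ^ k / k.factorial) := by
  obtain ⟨C, hC, h⟩ := gamma_inv_bound hν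
  refine ⟨C, hC, fun k s => ?_⟩
  have hg := gamma_pos' hν k
  have hf : (0:ℝ) < k.factorial := by positivity
  rw [abs_mul, abs_div, abs_pow, abs_pow, abs_neg, abs_one, one_pow, abs_mul, abs_of_pos hg,
    abs_of_pos hf]
  calc _ = (Real.Gamma ((k : ℝ) + ν + 1))⁻¹ * (|s| ^ k / k.factorial) := by field_simp
    _ ≤ _ := by gcongr; exact h k

lemma bF_summable {ν : ℝ} (hν : -1 < ν) (s : ℝ) : Summable fun k : ℕ =>
    (-1 : ℝ) ^ k / ((k.factorial : ℝ) * Real.Gamma ((k : ℝ) + ν + 1)) * s ^ k := by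
  obtain ⟨C, hC, h⟩ := bF_term_bound hν
  exact Summable.of_norm_bounded ((Real.summable_pow_div_factorial |s|).mul_left C) (fun k => h k s)

lemma bF_hasDerivAt {ν : ℝ} (hν : -1 < ν) (s : ℝ) : HasDerivAt (bF ν) (-bF (ν + 1) s) s := by
  obtain ⟨C, hC, h⟩ := gamma_inv_bound hν
  set R := |s| + 1 with hR
  have hRpos : 0 < R := by positivity
  have key := hasDerivAt_tsum_of_isPreconnected (𝕜 := ℝ)
    (g := fun (k : ℕ) (s : ℝ) => (-1 : ℝ) ^ k / ((k.factorial : ℝ) * Real.Gamma ((k : ℝ) + ν + 1)) * s ^ k)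
    (g' := fun (k : ℕ) (s : ℝ) => (-1 : ℝ) ^ k / ((k.factorial : ℝ) * Real.Gamma ((k : ℝ) + ν + 1)) * (k * s ^ (k - 1)))
    (u := fun k : ℕ => C * (k * R ^ (k - 1) / k.factorial)) (t := Metric.ball 0 R) (y₀ := s) (y := s)
    ?_ Metric.isOpen_ball (convex_ball 0 R).isPreconnected ?_ ?_ ?_ (bF_summable hν s) ?_
  · refine HasDerivAt.congr_deriv (f := bF ν) key ?_
    symm
    rw [Summable.tsum_eq_zero_add]
    · simp only [Nat.cast_zero, zero_mul, mul_zero, zero_add]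
      rw [bF, ← tsum_neg]
      apply tsum_congr
      intro k
      have : Real.Gamma (((k + 1 : ℕ) : ℝ) + ν + 1) = Real.Gamma ((k : ℝ) + (ν + 1) + 1) := by
        congr 1; push_cast; ring
      rw [this, Nat.factorial_succ, pow_succ]
      have hg := gamma_pos' (ν := ν + 1) (by linarith) k
      have hf : (0:ℝ) < k.factorial := by positivity
      push_cast
      try simp only [Nat.add_sub_cancel]
      field_simp
    · rw [← summable_nat_add_iff 1]
      refine ((bF_summable (ν := ν + 1) (by linarith) s).neg).congr ?_
      intro k
      have : Real.Gamma (((k + 1 : ℕ) : ℝ) + ν + 1) = Real.Gamma ((k : ℝ) + (ν + 1) + 1) := by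
        congr 1; push_cast; ring
      rw [this, Nat.factorial_succ, pow_succ]
      have hg := gamma_pos' (ν := ν + 1) (by linarith) k
      have hf : (0:ℝ) < k.factorial := by positivity
      push_cast
      try simp only [Nat.add_sub_cancel]
      field_simp
  · apply Summable.mul_left
    rw [← summable_nat_add_iff 1]
    refine (Real.summable_pow_div_factorial R).congr ?_
    intro k
    rw [Nat.factorial_succ]
    push_cast
    try simp only [Nat.add_sub_cancel]
    have hf : (0:ℝ) < k.factorial := by positivity
    field_simp
  · intro k y hy
    exact (hasDerivAt_pow k y).const_mul _
  · intro k y hy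
    have hy' : |y| ≤ R := by
      have := mem_ball_zero_iff.1 hy
      rw [Real.norm_eq_abs] at this
      exact this.le
    have hg := gamma_pos' hν k
    have hf : (0:ℝ) < k.factorial := by positivity
    rw [Real.norm_eq_abs, abs_mul, abs_div, abs_pow, abs_neg, abs_one, one_pow, abs_mul,
      abs_of_pos hg, abs_of_pos hf, abs_mul, abs_pow, Nat.abs_cast]
    calc _ = (Real.Gamma ((k : ℝ) + ν + 1))⁻¹ * (k * |y| ^ (k - 1) / k.factorial) := by field_simp
      _ ≤ _ := by gcongr; exact h k
  · simp [hR]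
  · simp [hR]

lemma bF_continuous {ν : ℝ} (hν : -1 < ν) : Continuous (bF ν) :=
  continuous_iff_continuousAt.2 fun s => (bF_hasDerivAt hν s).continuousAt

lemma bF_rec {ν : ℝ} (hν : -1 < ν) (s : ℝ) :
    bF ν s = (ν + 1) * bF (ν + 1) s - s * bF (ν + 2) s := by
  have h1 := bF_summable (ν := ν + 1) (by linarith) s
  have h2 := bF_summable (ν := ν + 2) (by linarith) s
  have hz : s * bF (ν + 2) s = ∑' k : ℕ, (-1 : ℝ) ^ (k+1) / ((k.factorial : ℝ) *
      Real.Gamma (((k + 1 : ℕ) : ℝ) + (ν + 1) + 1)) * s ^ (k + 1) * (-1) := by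
    rw [bF, ← tsum_mul_left]
    apply tsum_congr
    intro k
    have : Real.Gamma (((k + 1 : ℕ) : ℝ) + (ν + 1) + 1) = Real.Gamma ((k : ℝ) + (ν + 2) + 1) := by
      congr 1; push_cast; ring
    rw [this, pow_succ, pow_succ]; ring
  have e : ∀ k : ℕ, Real.Gamma ((k : ℝ) + (ν + 1) + 1)
      = ((k : ℝ) + ν + 1) * Real.Gamma ((k : ℝ) + ν + 1) := by
    intro k
    rw [← Real.Gamma_add_one]
    · congr 1; ring
    · have : (0:ℝ) ≤ k := Nat.cast_nonneg k
      linarith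
  have hs2 : Summable fun k : ℕ => (k : ℝ) * ((-1 : ℝ) ^ k / ((k.factorial : ℝ) *
      Real.Gamma ((k : ℝ) + (ν + 1) + 1)) * s ^ k) := by
    rw [← summable_nat_add_iff 1]
    refine (h2.mul_left (-s)).congr ?_
    intro k
    have : Real.Gamma (((k + 1 : ℕ) : ℝ) + (ν + 1) + 1) = Real.Gamma ((k : ℝ) + (ν + 2) + 1) := by
      congr 1; push_cast; ring
    have hg := gamma_pos' (ν := ν + 2) (by linarith) k
    have hf : (0:ℝ) < k.factorial := by positivity
    rw [this, Nat.factorial_succ, pow_succ, pow_succ]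
    push_cast
    field_simp
  have hz2 : s * bF (ν + 2) s = -∑' k : ℕ, (k : ℝ) * ((-1 : ℝ) ^ k / ((k.factorial : ℝ) *
      Real.Gamma ((k : ℝ) + (ν + 1) + 1)) * s ^ k) := by
    rw [hs2.tsum_eq_zero_add, hz, Nat.cast_zero, zero_mul, zero_add, ← tsum_neg]
    apply tsum_congr
    intro k
    have hg := gamma_pos' (ν := ν + 1) (by linarith) (k + 1)
    have hf : (0:ℝ) < k.factorial := by positivity
    rw [Nat.factorial_succ]
    push_cast at hg ⊢
    field_simp
  rw [hz2, sub_neg_eq_add, bF, bF, ← tsum_mul_left, ← (h1.mul_left (ν + 1)).tsum_add hs2]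
  apply tsum_congr
  intro k
  have hg := gamma_pos' hν k
  have hf : (0:ℝ) < k.factorial := by positivity
  have hk : (0:ℝ) < (k : ℝ) + ν + 1 := by
    have : (0:ℝ) ≤ k := Nat.cast_nonneg k
    linarith
  rw [e]
  field_simp
  ring

lemma bF_bound_half {ν : ℝ} (hν : -1 / 2 ≤ ν) {s : ℝ} (hs : 0 ≤ s) : |bF ν s| ≤ |bF ν 0| := by
  have hd := fun x => bF_hasDerivAt (ν := ν) (by linarith) x
  have hd1 := fun x => bF_hasDerivAt (ν := ν + 1) (by linarith) x
  have hG : ∀ x, HasDerivAt (fun x => bF ν x ^ 2 + x * bF (ν + 1) x ^ 2)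
      (-(2 * ν + 1) * bF (ν + 1) x ^ 2) x := by
    intro x
    have := ((hd x).pow 2).add ((hasDerivAt_id x).mul ((hd1 x).pow 2))
    refine this.congr_deriv ?_
    have hr := bF_rec (ν := ν) (by linarith) x
    have : ν + 1 + 1 = ν + 2 := by ring
    simp only [this, id, Pi.pow_apply]
    rw [hr]; push_cast; ring
  have hanti : AntitoneOn (fun x => bF ν x ^ 2 + x * bF (ν + 1) x ^ 2) (Set.Ici 0) := by
    apply antitoneOn_of_deriv_nonpos (convex_Ici 0)
    · exact fun x _ => (hG x).continuousAt.continuousWithinAt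
    · exact fun x _ => (hG x).differentiableAt.differentiableWithinAt
    · intro x _
      rw [(hG x).deriv]
      have := sq_nonneg (bF (ν + 1) x)
      have : 0 ≤ 2 * ν + 1 := by linarith
      nlinarith
  have := hanti (Set.mem_Ici.2 le_rfl) (Set.mem_Ici.2 hs) hs
  simp only [zero_mul, add_zero] at this
  apply sq_le_sq.1
  have := mul_nonneg hs (sq_nonneg (bF (ν + 1) s))
  linarith

lemma bF_bound {ν : ℝ} (hν : -1 < ν) : ∃ C : ℝ, 0 < C ∧ ∀ s, 0 ≤ s → |bF ν s| ≤ C * (1 + s) := by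
  refine ⟨(ν + 1) * |bF (ν + 1) 0| + |bF (ν + 2) 0| + 1, by
    have : 0 < ν + 1 := by linarith
    positivity, ?_⟩
  intro s hs
  have h0 : 0 < ν + 1 := by linarith
  have h1 := bF_bound_half (ν := ν + 1) (by linarith) hs
  have h2 := bF_bound_half (ν := ν + 2) (by linarith) hs
  rw [bF_rec hν]
  calc _ ≤ |(ν + 1) * bF (ν + 1) s| + |s * bF (ν + 2) s| := abs_sub _ _
    _ = (ν + 1) * |bF (ν + 1) s| + s * |bF (ν + 2) s| := by
      rw [abs_mul, abs_mul, abs_of_pos h0, abs_of_nonneg hs]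
    _ ≤ (ν + 1) * |bF (ν + 1) 0| + s * |bF (ν + 2) 0| := by gcongr
    _ ≤ _ := by
      have := abs_nonneg (bF (ν + 1) 0)
      have := abs_nonneg (bF (ν + 2) 0)
      nlinarith [mul_nonneg h0.le (abs_nonneg (bF (ν + 1) 0)), mul_nonneg hs (mul_nonneg h0.le (abs_nonneg (bF (ν + 1) 0)))]

lemma besselJ_eq (ν : ℝ) {x : ℝ} (hx : 0 < x) :
    x ^ (-ν) * besselJ ν x = 2 ^ (-ν) * bF ν (x ^ 2 / 4) := by
  rw [besselJ, bF, ← tsum_mul_left, ← tsum_mul_left]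
  apply tsum_congr
  intro k
  have h1 : (x / 2) ^ (2 * (k : ℝ) + ν) = (x ^ 2 / 4) ^ k * (x ^ ν * 2 ^ (-ν)) := by
    rw [Real.rpow_add (by positivity), Real.div_rpow hx.le (by norm_num) ν,
      Real.rpow_neg (by norm_num), div_eq_mul_inv (x ^ ν)]
    congr 1
    have : (2 * (k : ℝ)) = ((2 * k : ℕ) : ℝ) := by push_cast; ring
    rw [this, Real.rpow_natCast, pow_mul]
    congr 1; ring
  have h2 : x ^ (-ν) * x ^ ν = 1 := by
    rw [← Real.rpow_add hx]; simp
  rw [h1]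
  linear_combination ((-1 : ℝ) ^ k / ((k.factorial : ℝ) * Real.Gamma ((k : ℝ) + ν + 1))) * (x ^ 2 / 4) ^ k * 2 ^ (-ν) * h2

lemma hilbert_aux {E ι : Type*} [NormedAddCommGroup E] [InnerProductSpace ℂ E] [CompleteSpace E]
    (A B : ι → E) (h1 : ∀ i j, inner ℂ (A i) (A j) = inner ℂ (B i) (B j))
    (h2 : ∀ i j, inner ℂ (A i) (B j) = inner ℂ (B i) (A j))
    (hd : (Submodule.span ℂ (Set.range A))ᗮ = ⊥) (f : E) :
    ∃ u : E, ‖u‖ = ‖f‖ ∧ ∀ j, inner ℂ (A j) u = inner ℂ (B j) f := by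
  set eA := Finsupp.linearCombination ℂ A
  set eB := Finsupp.linearCombination ℂ B
  have hdense : DenseRange eA := by
    have : (Submodule.span ℂ (Set.range A)).topologicalClosure = ⊤ :=
      Submodule.topologicalClosure_eq_top_iff.2 hd
    rw [← Finsupp.range_linearCombination] at this
    intro x
    have hx : x ∈ (LinearMap.range eA).topologicalClosure := by rw [this]; trivial
    exact hx
  have hinner : ∀ x, inner ℂ (eA x) (eA x) = inner ℂ (eB x) (eB x) := by
    intro x
    simp only [eA, eB, Finsupp.linearCombination_apply, Finsupp.sum, sum_inner, inner_sum,
      inner_smul_left, inner_smul_right, h1]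
  have hnorm : ∀ x, ‖eB x‖ = ‖eA x‖ := by
    intro x
    rw [@norm_eq_sqrt_re_inner ℂ, @norm_eq_sqrt_re_inner ℂ, hinner]
  have hnorm' : ∀ x, ‖eB x‖ ≤ 1 * ‖eA x‖ := fun x => by rw [hnorm, one_mul]
  set U := LinearMap.extendOfNorm eB eA
  have hU : ∀ x, U (eA x) = eB x := fun x => LinearMap.extendOfNorm_eq hdense ⟨1, hnorm'⟩ x
  refine ⟨U f, ?_, ?_⟩
  · refine hdense.induction_on (p := fun f => ‖U f‖ = ‖f‖) f ?_ ?_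
    · exact isClosed_eq (by fun_prop) (by fun_prop)
    · intro x
      rw [hU, hnorm]
  · intro j
    refine hdense.induction_on (p := fun f => inner ℂ (A j) (U f) = inner ℂ (B j) f) f ?_ ?_
    · exact isClosed_eq (by fun_prop) (by fun_prop)
    · intro x
      rw [hU]
      simp only [eA, eB, Finsupp.linearCombination_apply, Finsupp.sum, inner_sum,
        inner_smul_right, h2]

def mu (a : ℝ) : Measure ℝ :=
  ((volume : Measure ℝ).restrict (Set.Ioi 0)).withDensity fun z => ENNReal.ofReal (z ^ a)

instance (a : ℝ) : SigmaFinite (mu a) := by unfold mu; exact SigmaFinite.withDensity_ofReal _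

lemma mu_toReal_ae (a : ℝ) {E : Type*} [NormedAddCommGroup E] [NormedSpace ℝ E] (f : ℝ → E) :
    (fun z => (ENNReal.ofReal (z ^ a)).toReal • f z)
      =ᵐ[(volume : Measure ℝ).restrict (Set.Ioi 0)] fun z => (z ^ a) • f z := by
  filter_upwards [ae_restrict_mem measurableSet_Ioi] with z hz
  rw [ENNReal.toReal_ofReal (Real.rpow_nonneg (le_of_lt hz) a)]

lemma integrable_mu_iff (a : ℝ) {E : Type*} [NormedAddCommGroup E] [NormedSpace ℝ E] {f : ℝ → E} :
    Integrable f (mu a) ↔ IntegrableOn (fun z => (z ^ a) • f z) (Set.Ioi 0) := by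
  rw [mu, integrable_withDensity_iff_integrable_smul' (by fun_prop) (by simp),
    IntegrableOn, integrable_congr (mu_toReal_ae a f)]

lemma integral_mu (a : ℝ) {E : Type*} [NormedAddCommGroup E] [NormedSpace ℝ E] (f : ℝ → E) :
    ∫ z, f z ∂(mu a) = ∫ z in Set.Ioi 0, (z ^ a) • f z := by
  rw [mu, integral_withDensity_eq_integral_toReal_smul (by fun_prop) (by simp),
    integral_congr_ae (mu_toReal_ae a f)]

lemma ae_mu_pos (a : ℝ) : ∀ᵐ z ∂(mu a), 0 < z := by
  have h : mu a ≪ (volume : Measure ℝ).restrict (Set.Ioi 0) := withDensity_absolutelyContinuous _ _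
  exact h.ae_le (ae_restrict_mem measurableSet_Ioi)

lemma integrable_gauss {a : ℝ} (ha : -1 < a) {p : ℝ} (hp : 0 < p) (k : ℕ) :
    Integrable (fun z => z ^ k * Real.exp (-p * z ^ 2)) (mu a) := by
  rw [integrable_mu_iff]
  have hk : (0:ℝ) ≤ k := Nat.cast_nonneg k
  refine (integrableOn_rpow_mul_exp_neg_mul_sq hp (s := a + k) (by linarith)).congr_fun ?_
    measurableSet_Ioi
  intro z hz
  simp only [smul_eq_mul]
  rw [Real.rpow_add hz, Real.rpow_natCast]; ring

lemma integral_gauss {a : ℝ} (ha : -1 < a) {p : ℝ} (hp : 0 < p) (k : ℕ) :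
    ∫ z, z ^ (2 * k) * Real.exp (-p * z ^ 2) ∂(mu a)
      = p ^ (-((a + 1) / 2)) / p ^ k * Real.Gamma (k + (a - 1) / 2 + 1) / 2 := by
  have hk : (0:ℝ) ≤ k := Nat.cast_nonneg k
  rw [integral_mu]
  have := _root_.integral_rpow_mul_exp_neg_mul_rpow (p := 2) (q := a + 2 * k) (b := p) (by norm_num)
    (by linarith) hp
  have e1 : (-(a + 2 * k + 1) / 2) = (-((a + 1) / 2)) - (k : ℝ) := by ring
  have e2 : ((a + 2 * k + 1) / 2) = (k : ℝ) + (a - 1) / 2 + 1 := by ring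
  rw [e1, e2, Real.rpow_sub hp, Real.rpow_natCast] at this
  rw [show ∀ x y : ℝ, x * y / 2 = x * (1 / 2) * y from fun x y => by ring, ← this]
  apply setIntegral_congr_fun measurableSet_Ioi
  intro z hz
  simp only [smul_eq_mul]
  have : (2 * (k : ℝ)) = ((2 * k : ℕ) : ℝ) := by push_cast; ring
  rw [Real.rpow_add hz, this, Real.rpow_natCast, Real.rpow_two]; ring

lemma unique_aux {a : ℝ} {h : ℝ → ℂ}
    (hi : Integrable (fun z => h z * (Real.exp (-1 * z ^ 2) : ℝ)) (mu a))
    (h0 : ∀ p : ℝ, 0 < p → ∫ z, h z * (Real.exp (-p * z ^ 2) : ℝ) ∂(mu a) = 0) :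
    h =ᵐ[mu a] 0 := by
  set k : ℝ → ℂ := fun z => h z * (Real.exp (-1 * z ^ 2) : ℝ) with hk
  have hbd : ∀ z : ℝ, Real.exp (-z ^ 2) ∈ Set.Icc (0:ℝ) 1 := fun z =>
    ⟨(Real.exp_pos _).le, Real.exp_le_one_iff.2 (by nlinarith [sq_nonneg z])⟩
  have hint : ∀ φ : ℝ → ℝ, Measurable φ → (∃ C, ∀ z, |φ z| ≤ C) →
      Integrable (fun z => (φ z : ℂ) * k z) (mu a) := by
    rintro φ hφ ⟨C, hC⟩
    refine hi.bdd_mul (c := C) (by fun_prop) ?_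
    filter_upwards with z
    simpa using hC z
  have hpow : ∀ n : ℕ, ∫ z, (((Real.exp (-z ^ 2)) ^ n : ℝ) : ℂ) * k z ∂(mu a) = 0 := by
    intro n
    rw [← h0 (n + 1) (by positivity)]
    congr 1; ext z
    rw [hk, ← Real.exp_nat_mul, mul_comm, mul_assoc, ← Complex.ofReal_mul, ← Real.exp_add]
    congr 4; ring
  have hpint : ∀ n : ℕ, Integrable (fun z => (((Real.exp (-z ^ 2)) ^ n : ℝ) : ℂ) * k z) (mu a) := by
    intro n
    apply hint _ (by fun_prop)
    refine ⟨1, fun z => ?_⟩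
    rw [abs_of_nonneg (pow_nonneg (hbd z).1 _)]
    exact pow_le_one₀ (hbd z).1 (hbd z).2
  have hpoly : ∀ P : Polynomial ℝ, Integrable (fun z => ((P.eval (Real.exp (-z ^ 2)) : ℝ) : ℂ) * k z) (mu a) ∧
      ∫ z, ((P.eval (Real.exp (-z ^ 2)) : ℝ) : ℂ) * k z ∂(mu a) = 0 := by
    intro P
    induction P using Polynomial.induction_on' with
    | add P Q hP hQ =>
      simp only [Polynomial.eval_add, Complex.ofReal_add, add_mul]
      refine ⟨hP.1.add hQ.1, ?_⟩
      rw [integral_add hP.1 hQ.1, hP.2, hQ.2, add_zero]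
    | monomial n c =>
      simp only [Polynomial.eval_monomial, Complex.ofReal_mul c, mul_assoc]
      refine ⟨(hpint n).const_mul _, ?_⟩
      rw [integral_const_mul, hpow, mul_zero]
  have hk0 : ∀ᵐ z ∂(volume : Measure ℝ), z ∈ Set.Ioi (0:ℝ) → (z ^ a) • k z = 0 := by
    apply isOpen_Ioi.ae_eq_zero_of_integral_contDiff_smul_eq_zero
    · exact ((integrable_mu_iff a).1 hi).locallyIntegrableOn
    intro g hg hgc hgs
    have hg0 : ∀ z, z ∉ Set.Ioi (0:ℝ) → g z = 0 := fun z hz =>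
      image_eq_zero_of_notMem_tsupport fun hh => hz (hgs hh)
    have e1 : ∫ z, g z • (z ^ a) • k z = ∫ z, (g z : ℂ) * k z ∂(mu a) := by
      rw [integral_mu, ← setIntegral_eq_integral_of_forall_compl_eq_zero (s := Set.Ioi 0)]
      · apply setIntegral_congr_fun measurableSet_Ioi
        intro z hz
        simp only [Complex.real_smul]; ring
      · intro z hz
        rw [hg0 z hz, zero_smul]
    rw [e1]
    set φ : ℝ → ℝ := fun s => g (Real.sqrt (-Real.log s)) with hφ
    have hφe : ∀ z : ℝ, 0 < z → φ (Real.exp (-z ^ 2)) = g z := by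
      intro z hz
      simp only [hφ]
      rw [Real.log_exp, neg_neg, Real.sqrt_sq hz.le]
    obtain ⟨M, hM⟩ : ∃ M : ℝ, ∀ z, M < z → g z = 0 := by
      obtain ⟨M, hM⟩ := hgc.isCompact.bddAbove
      refine ⟨M, fun z hz => image_eq_zero_of_notMem_tsupport fun hh => ?_⟩
      exact absurd (hM hh) (not_le.2 hz)
    have hφc : ContinuousOn φ (Set.Icc 0 1) := by
      intro s hs
      apply ContinuousAt.continuousWithinAt
      rcases eq_or_lt_of_le hs.1 with h | h
      · subst h
        have hz : φ 0 = 0 := by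
          simp only [hφ]; rw [Real.log_zero, neg_zero, Real.sqrt_zero]
          exact hg0 0 (by simp)
        rw [ContinuousAt, hz]
        apply tendsto_const_nhds.congr'
        have h1 : ∀ᶠ s : ℝ in 𝓝 0, |s| < Real.exp (-(M ^ 2 + 1)) := by
          have : Filter.Tendsto (fun s : ℝ => |s|) (𝓝 0) (𝓝 |0|) := (continuous_abs.tendsto 0)
          rw [abs_zero] at this
          exact this.eventually (gt_mem_nhds (Real.exp_pos _))
        filter_upwards [h1] with s hs
        by_cases h : s = 0
        · rw [h, hz]
        symm
        apply hM
        apply Real.lt_sqrt_of_sq_lt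
        have := Real.log_lt_log (abs_pos.2 h) hs
        rw [Real.log_exp, Real.log_abs] at this
        linarith
      · simp only [hφ]
        have := Real.continuousAt_log h.ne'
        have hgc := hg.continuous.continuousAt (x := Real.sqrt (-Real.log s))
        exact ContinuousAt.comp (f := fun s => Real.sqrt (-Real.log s)) hgc
          (Real.continuous_sqrt.continuousAt.comp this.neg)
    obtain ⟨Cg, hCg⟩ := hgc.exists_bound_of_continuous hg.continuous
    have hgi := hint g hg.continuous.measurable ⟨Cg, hCg⟩
    by_contra hne
    have hpos : 0 < ‖∫ z, (g z : ℂ) * k z ∂(mu a)‖ := norm_pos_iff.2 hne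
    set L := ∫ z, ‖k z‖ ∂(mu a)
    have hL : 0 ≤ L := integral_nonneg fun z => norm_nonneg _
    set ε := ‖∫ z, (g z : ℂ) * k z ∂(mu a)‖ / (L + 1) with hε
    have hεp : 0 < ε := by positivity
    obtain ⟨P, hP⟩ := exists_polynomial_near_of_continuousOn 0 1 φ hφc ε hεp
    have hle : ‖∫ z, (g z : ℂ) * k z ∂(mu a)‖ ≤ ε * L := by
      have : ∫ z, (g z : ℂ) * k z ∂(mu a) = ∫ z, ((g z : ℂ) * k z - ((P.eval (Real.exp (-z ^ 2)) : ℝ) : ℂ) * k z) ∂(mu a) := by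
        rw [integral_sub hgi (hpoly P).1, (hpoly P).2, sub_zero]
      rw [this]
      rw [← integral_const_mul]
      apply norm_integral_le_of_norm_le (hi.norm.const_mul ε)
      filter_upwards [ae_mu_pos a] with z hz
      rw [← sub_mul, norm_mul]
      gcongr
      have := (hP _ (hbd z)).le
      rw [hφe z hz] at this
      rw [← Complex.ofReal_sub, Complex.norm_real, Real.norm_eq_abs, abs_sub_comm]
      exact this
    have : ε * (L + 1) = ‖∫ z, (g z : ℂ) * k z ∂(mu a)‖ := by rw [hε]; field_simp
    nlinarith
  have h1 : ∀ᵐ z ∂((volume : Measure ℝ).restrict (Set.Ioi 0)), (z ^ a) • k z = 0 :=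
    (ae_restrict_iff' measurableSet_Ioi).2 hk0
  have h2 : mu a ≪ (volume : Measure ℝ).restrict (Set.Ioi 0) := withDensity_absolutelyContinuous _ _
  filter_upwards [h2.ae_le h1, ae_mu_pos a] with z hz hzp
  have : (z ^ a) ≠ 0 := (Real.rpow_pos_of_pos hzp a).ne'
  rw [smul_eq_zero] at hz
  have hz := hz.resolve_left this
  simpa [hk] using hz

def Ker (a l z ζ : ℝ) : ℝ :=
  l ^ (-((a + 1) / 2)) * 2 ^ (-((a - 1) / 2)) * bF ((a - 1) / 2) ((z * ζ / l) ^ 2 / 4)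

lemma Ker_cont {a : ℝ} (ha : -1 < a) (l : ℝ) : Continuous fun q : ℝ × ℝ => Ker a l q.1 q.2 := by
  unfold Ker
  have := bF_continuous (ν := (a - 1) / 2) (by linarith)
  fun_prop

lemma Ker_bound {a : ℝ} (ha : -1 < a) (l : ℝ) :
    ∃ C : ℝ, 0 < C ∧ ∀ z ζ, |Ker a l z ζ| ≤ C * ((1 + z ^ 2) * (1 + ζ ^ 2)) := by
  obtain ⟨C, hC, h⟩ := bF_bound (ν := (a - 1) / 2) (by linarith)
  set D := |l ^ (-((a + 1) / 2)) * 2 ^ (-((a - 1) / 2))| with hD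
  refine ⟨(D + 1) * (C * (1 + (1 / l) ^ 2)), by positivity, fun z ζ => ?_⟩
  rw [Ker, abs_mul, ← hD]
  have h1 := h ((z * ζ / l) ^ 2 / 4) (by positivity)
  have h2 : 1 + (z * ζ / l) ^ 2 / 4 ≤ (1 + (1 / l) ^ 2) * ((1 + z ^ 2) * (1 + ζ ^ 2)) := by
    have e : (z * ζ / l) ^ 2 = (1 / l) ^ 2 * (z ^ 2 * ζ ^ 2) := by ring
    rw [e]
    have := sq_nonneg z
    have := sq_nonneg ζ
    have := sq_nonneg (1 / l)
    have := mul_nonneg (sq_nonneg z) (sq_nonneg ζ)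
    have := mul_nonneg (sq_nonneg (1 / l)) (mul_nonneg (sq_nonneg z) (sq_nonneg ζ))
    have := mul_nonneg (sq_nonneg (1 / l)) (sq_nonneg z)
    have := mul_nonneg (sq_nonneg (1 / l)) (sq_nonneg ζ)
    nlinarith
  calc D * |bF ((a - 1) / 2) ((z * ζ / l) ^ 2 / 4)|
      ≤ (D + 1) * (C * ((1 + (1 / l) ^ 2) * ((1 + z ^ 2) * (1 + ζ ^ 2)))) := by
        gcongr
        · linarith
        · exact h1.trans (by gcongr)
    _ = _ := by ring

lemma weber {a : ℝ} (ha : -1 < a) {l : ℝ} (hl : 0 < l) {p : ℝ} (hp : 0 < p) (z : ℝ) :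
    ∫ ζ, Ker a l z ζ * Real.exp (-p * ζ ^ 2) ∂(mu a)
      = (2 * p * l) ^ (-((a + 1) / 2)) * Real.exp (-(1 / (4 * p * l ^ 2)) * z ^ 2) := by
  have hν : -1 < (a - 1) / 2 := by linarith
  set ν := (a - 1) / 2 with hνd
  set X := z ^ 2 / (4 * l ^ 2) with hX
  have hX0 : 0 ≤ X := by positivity
  set F : ℕ → ℝ → ℝ := fun k ζ => (-1 : ℝ) ^ k / ((k.factorial : ℝ) * Real.Gamma ((k : ℝ) + ν + 1)) * X ^ k
    * (ζ ^ (2 * k) * Real.exp (-p * ζ ^ 2)) with hF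
  have hFi : ∀ k, Integrable (F k) (mu a) := fun k => (integrable_gauss ha hp (2 * k)).const_mul _
  have hval : ∀ k, ∫ ζ, F k ζ ∂(mu a) = p ^ (-((a + 1) / 2)) / 2 * ((-(X / p)) ^ k / k.factorial) := by
    intro k
    simp only [hF]
    rw [integral_const_mul, integral_gauss ha hp, ← hνd]
    clear_value X ν
    have hg := gamma_pos' hν k
    have hf : (0:ℝ) < k.factorial := by positivity
    rw [neg_pow (X / p), div_pow]
    field_simp
  have hnorm : ∀ k, ∫ ζ, ‖F k ζ‖ ∂(mu a) = p ^ (-((a + 1) / 2)) / 2 * ((X / p) ^ k / k.factorial) := by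
    intro k
    have hg := gamma_pos' hν k
    have hf : (0:ℝ) < k.factorial := by positivity
    have : ∀ ζ, ‖F k ζ‖ = 1 / ((k.factorial : ℝ) * Real.Gamma ((k : ℝ) + ν + 1)) * X ^ k
      * (ζ ^ (2 * k) * Real.exp (-p * ζ ^ 2)) := by
      intro ζ
      simp only [hF]
      rw [Real.norm_eq_abs, abs_mul, abs_mul, abs_div, abs_pow, abs_neg, abs_one, one_pow,
        abs_of_pos (mul_pos hf hg), abs_of_nonneg (pow_nonneg hX0 k), abs_of_nonneg]
      rw [pow_mul]
      positivity
    simp only [this]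
    rw [integral_const_mul, integral_gauss ha hp, ← hνd]
    clear_value X ν
    rw [div_pow]
    field_simp
  have hsum : Summable fun k => ∫ ζ, ‖F k ζ‖ ∂(mu a) := by
    simp only [hnorm]
    exact (Real.summable_pow_div_factorial _).mul_left _
  have hs := integral_tsum_of_summable_integral_norm hFi hsum
  simp only [hval] at hs
  rw [tsum_mul_left] at hs
  have hexp : ∑' k : ℕ, (-(X / p)) ^ k / (k.factorial : ℝ) = Real.exp (-(X / p)) := by
    rw [Real.exp_eq_exp_ℝ, NormedSpace.exp_eq_tsum_div]
  rw [hexp] at hs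
  have hptw : ∀ ζ, Ker a l z ζ * Real.exp (-p * ζ ^ 2)
      = l ^ (-((a + 1) / 2)) * 2 ^ (-ν) * ∑' k, F k ζ := by
    intro ζ
    rw [Ker, mul_assoc, bF, ← tsum_mul_right]
    congr 1
    apply tsum_congr
    intro k
    simp only [hF]
    have : ((z * ζ / l) ^ 2 / 4) ^ k = X ^ k * ζ ^ (2 * k) := by
      rw [pow_mul, ← mul_pow, hX]; congr 1; field_simp
    rw [← hνd, this]; ring
  simp only [hptw]
  rw [integral_const_mul, ← hs, Real.mul_rpow (by positivity) hl.le, Real.mul_rpow (by norm_num) hp.le]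
  have e1 : -(X / p) = -(1 / (4 * p * l ^ 2)) * z ^ 2 := by rw [hX]; field_simp
  have e2 : (2:ℝ) ^ (-((a + 1) / 2)) = 2 ^ (-ν) / 2 := by
    rw [show -((a + 1) / 2) = -ν - 1 by rw [hνd]; ring, Real.rpow_sub (by norm_num), Real.rpow_one]
  rw [e1, e2]; ring

def gau (p : ℝ) (z : ℝ) : ℂ := (Real.exp (-p * z ^ 2) : ℝ)

lemma gau_memLp {a : ℝ} (ha : -1 < a) {p : ℝ} (hp : 0 < p) : MemLp (gau p) 2 (mu a) := by
  have hc : Continuous (gau p) := by unfold gau; fun_prop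
  rw [memLp_two_iff_integrable_sq_norm hc.aestronglyMeasurable]
  refine (integrable_gauss ha (p := 2 * p) (by positivity) 0).congr ?_
  filter_upwards with z
  rw [gau, Complex.norm_real, Real.norm_eq_abs, Real.abs_exp, ← Real.exp_nat_mul]
  simp only [pow_zero, one_mul]
  congr 1; push_cast; ring

lemma gau_inner {a : ℝ} (ha : -1 < a) {p q : ℝ} (hp : 0 < p) (hq : 0 < q) :
    inner ℂ ((gau_memLp ha hp).toLp) ((gau_memLp ha hq).toLp)
      = (((p + q) ^ (-((a + 1) / 2)) * (Real.Gamma ((a - 1) / 2 + 1) / 2) : ℝ) : ℂ) := by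
  rw [L2.inner_def]
  have := integral_gauss ha (p := p + q) (by positivity) 0
  simp only [pow_zero, mul_zero, div_one, one_mul, Nat.cast_zero, zero_add] at this
  rw [← mul_div_assoc, ← this, ← integral_complex_ofReal]
  apply integral_congr_ae
  filter_upwards [(gau_memLp ha hp).coeFn_toLp, (gau_memLp ha hq).coeFn_toLp] with z h1 h2
  rw [h1, h2, gau, gau]
  simp only [RCLike.inner_apply, Complex.conj_ofReal]
  rw [← Complex.ofReal_mul, ← Real.exp_add]
  congr 2; ring

lemma gau_dense {a : ℝ} (ha : -1 < a) :
    (Submodule.span ℂ (Set.range fun p : {p : ℝ // 0 < p} => (gau_memLp ha p.2).toLp))ᗮ = ⊥ := by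
  rw [Submodule.eq_bot_iff]
  intro f hf
  rw [Submodule.mem_orthogonal] at hf
  have h0 : ∀ p : ℝ, (hp : 0 < p) → ∫ z, f z * (Real.exp (-p * z ^ 2) : ℝ) ∂(mu a) = 0 := by
    intro p hp
    have := hf _ (Submodule.subset_span ⟨⟨p, hp⟩, rfl⟩)
    rw [L2.inner_def] at this
    rw [← this]
    apply integral_congr_ae
    filter_upwards [(gau_memLp ha hp).coeFn_toLp] with z h1
    rw [h1, gau]
    simp only [RCLike.inner_apply, Complex.conj_ofReal]
  have hfm : MemLp f 2 (mu a) := Lp.memLp f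
  have hi : Integrable (fun z => f z * (Real.exp (-1 * z ^ 2) : ℝ)) (mu a) :=
    hfm.integrable_mul (gau_memLp ha one_pos)
  exact (Lp.eq_zero_iff_ae_eq_zero).2 (unique_aux hi h0)

lemma hankel_plancherel {a : ℝ} (ha : -1 < a) {l : ℝ} (hl : 0 < l) {f : ℝ → ℂ}
    (hf2 : MemLp f 2 (mu a)) (hf1 : Integrable (fun ζ => ((1 + ζ ^ 2 : ℝ) : ℂ) * f ζ) (mu a)) :
    ∫⁻ z, ‖∫ ζ, (Ker a l z ζ : ℂ) * f ζ ∂(mu a)‖ₑ ^ 2 ∂(mu a) = ∫⁻ z, ‖f z‖ₑ ^ 2 ∂(mu a) := by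
  set c : ℝ → ℝ := fun p => (2 * p * l) ^ (-((a + 1) / 2)) with hc
  set r : ℝ → ℝ := fun p => 1 / (4 * p * l ^ 2) with hr
  have hrp : ∀ p, 0 < p → 0 < r p := fun p hp => by simp only [hr]; positivity
  set A : {p : ℝ // 0 < p} → Lp ℂ 2 (mu a) := fun p => (gau_memLp ha p.2).toLp with hA
  set B : {p : ℝ // 0 < p} → Lp ℂ 2 (mu a) := fun p => (c p : ℂ) • (gau_memLp ha (hrp p p.2)).toLp with hB
  have hh1 : ∀ i j, inner ℂ (A i) (A j) = inner ℂ (B i) (B j) := by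
    rintro ⟨p, hp⟩ ⟨q, hq⟩
    simp only [hA, hB, inner_smul_left, inner_smul_right, Complex.conj_ofReal]
    rw [gau_inner ha hp hq, gau_inner ha (hrp p hp) (hrp q hq), ← Complex.ofReal_mul,
      ← Complex.ofReal_mul]
    congr 1
    rw [← mul_assoc (c p), ← mul_assoc (c q)]
    congr 1
    simp only [hc, hr]
    rw [← Real.mul_rpow (by positivity) (by positivity), ← Real.mul_rpow (by positivity) (by positivity)]
    congr 1
    field_simp
    ring
  have hh2 : ∀ i j, inner ℂ (A i) (B j) = inner ℂ (B i) (A j) := by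
    rintro ⟨p, hp⟩ ⟨q, hq⟩
    simp only [hA, hB, inner_smul_left, inner_smul_right, Complex.conj_ofReal]
    rw [gau_inner ha hp (hrp q hq), gau_inner ha (hrp p hp) hq, ← Complex.ofReal_mul,
      ← Complex.ofReal_mul]
    congr 1
    rw [← mul_assoc (c p), ← mul_assoc (c q)]
    congr 1
    simp only [hc, hr]
    rw [← Real.mul_rpow (by positivity) (by positivity), ← Real.mul_rpow (by positivity) (by positivity)]
    congr 1
    field_simp
    ring
  obtain ⟨u, hu1, hu2⟩ := hilbert_aux A B hh1 hh2 (gau_dense ha) (hf2.toLp)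
  set H : ℝ → ℂ := fun z => ∫ ζ, (Ker a l z ζ : ℂ) * f ζ ∂(mu a) with hH
  obtain ⟨C, hC, hK⟩ := Ker_bound ha l
  have hKm := (Ker_cont ha l).measurable
  have hfub : ∀ p : ℝ, 0 < p → Integrable (fun q : ℝ × ℝ =>
      (Real.exp (-p * q.1 ^ 2) : ℂ) * ((Ker a l q.1 q.2 : ℂ) * f q.2)) ((mu a).prod (mu a)) := by
    intro p hp
    have hg : Integrable (fun z : ℝ => C * ((1 + z ^ 2) * Real.exp (-p * z ^ 2))) (mu a) := by
      apply Integrable.const_mul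
      have := (integrable_gauss ha hp 0).add (integrable_gauss ha hp 2)
      refine this.congr ?_
      filter_upwards with z
      simp only [Pi.add_apply]; ring
    refine (hg.mul_prod hf1.norm).mono' ?_ ?_
    · have : AEStronglyMeasurable (fun q : ℝ × ℝ => f q.2) ((mu a).prod (mu a)) := hf2.1.comp_snd
      refine AEStronglyMeasurable.mul (by fun_prop) (AEStronglyMeasurable.mul ?_ this)
      exact (Complex.measurable_ofReal.comp hKm).aestronglyMeasurable
    · filter_upwards with q
      simp only [norm_mul, Complex.norm_real, Real.norm_eq_abs, Real.abs_exp]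
      have := hK q.1 q.2
      rw [abs_of_pos (show (0:ℝ) < 1 + q.2 ^ 2 by positivity)]
      calc _ ≤ Real.exp (-p * q.1 ^ 2) * ((C * ((1 + q.1 ^ 2) * (1 + q.2 ^ 2))) * ‖f q.2‖) := by gcongr
        _ = _ := by ring
  have hHi : ∀ p, 0 < p → Integrable (fun z => H z * (Real.exp (-p * z ^ 2) : ℝ)) (mu a) := by
    intro p hp
    refine (hfub p hp).integral_prod_left.congr ?_
    filter_upwards with z
    rw [integral_const_mul, mul_comm]
  have hHv : ∀ p, (hp : 0 < p) → ∫ z, H z * (Real.exp (-p * z ^ 2) : ℝ) ∂(mu a)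
      = ∫ ζ, (c p : ℂ) * gau (r p) ζ * f ζ ∂(mu a) := by
    intro p hp
    calc _ = ∫ z, ∫ ζ, (Real.exp (-p * z ^ 2) : ℂ) * ((Ker a l z ζ : ℂ) * f ζ) ∂(mu a) ∂(mu a) := by
          congr 1; ext z; rw [integral_const_mul, mul_comm]
      _ = ∫ ζ, ∫ z, (Real.exp (-p * z ^ 2) : ℂ) * ((Ker a l z ζ : ℂ) * f ζ) ∂(mu a) ∂(mu a) :=
          integral_integral_swap (hfub p hp)
      _ = _ := by
          congr 1; ext ζ
          have : ∀ z : ℝ, (Real.exp (-p * z ^ 2) : ℂ) * ((Ker a l z ζ : ℂ) * f ζ)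
              = ((Ker a l ζ z * Real.exp (-p * z ^ 2) : ℝ) : ℂ) * f ζ := by
            intro z
            have : Ker a l z ζ = Ker a l ζ z := by unfold Ker; rw [mul_comm z ζ]
            rw [this]; push_cast; ring
          simp only [this]
          rw [integral_mul_const, integral_complex_ofReal, weber ha hl hp, gau, Complex.ofReal_mul]
  have hUi : ∀ p, 0 < p → Integrable (fun z => u z * (Real.exp (-p * z ^ 2) : ℝ)) (mu a) :=
    fun p hp => (Lp.memLp u).integrable_mul (gau_memLp ha hp)
  have hUv : ∀ p, (hp : 0 < p) → ∫ z, u z * (Real.exp (-p * z ^ 2) : ℝ) ∂(mu a)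
      = ∫ ζ, (c p : ℂ) * gau (r p) ζ * f ζ ∂(mu a) := by
    intro p hp
    have := hu2 ⟨p, hp⟩
    simp only [hA, hB] at this
    rw [inner_smul_left, L2.inner_def, L2.inner_def, ← integral_const_mul] at this
    refine Eq.trans (integral_congr_ae ?_) (this.trans (integral_congr_ae ?_))
    · filter_upwards [(gau_memLp ha hp).coeFn_toLp] with z h1
      rw [h1, gau]
      simp only [RCLike.inner_apply, Complex.conj_ofReal]
    · filter_upwards [(gau_memLp ha (hrp p hp)).coeFn_toLp, hf2.coeFn_toLp] with z h1 h2
      rw [h1, h2, gau]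
      simp only [RCLike.inner_apply, Complex.conj_ofReal]
      ring
  have hHU : H =ᵐ[mu a] u := by
    have := unique_aux (a := a) (h := fun z => H z - u z) ?_ ?_
    · filter_upwards [this] with z hz
      exact sub_eq_zero.1 hz
    · simp only [sub_mul]
      exact (hHi 1 one_pos).sub (hUi 1 one_pos)
    · intro p hp
      simp only [sub_mul]
      rw [integral_sub (hHi p hp) (hUi p hp), hHv p hp, hUv p hp, sub_self]
  have e1 : eLpNorm H 2 (mu a) = eLpNorm f 2 (mu a) := by
    rw [eLpNorm_congr_ae hHU, ← eLpNorm_congr_ae hf2.coeFn_toLp, ← Lp.enorm_def, ← Lp.enorm_def,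
      enorm_eq_iff_norm_eq]
    exact hu1
  have key : ∀ g : ℝ → ℂ, ∫⁻ z, ‖g z‖ₑ ^ 2 ∂(mu a) = eLpNorm g 2 (mu a) ^ 2 := by
    intro g
    have := eLpNorm_nnreal_pow_eq_lintegral (f := g) (μ := mu a) (p := 2) (by norm_num)
    simp only [NNReal.coe_ofNat, ENNReal.coe_ofNat, ENNReal.rpow_ofNat] at this
    exact this.symm
  rw [key, key, e1]

lemma tg_exp (c : ℝ) : Function.HasTemperateGrowth (fun s : ℝ => Complex.exp (((c * s : ℝ) : ℂ) * Complex.I)) := by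
  have key : ∀ n : ℕ, iteratedDeriv n (fun s : ℝ => Complex.exp (((c * s : ℝ) : ℂ) * Complex.I))
      = fun s : ℝ => ((c : ℂ) * Complex.I) ^ n * Complex.exp (((c * s : ℝ) : ℂ) * Complex.I) := by
    intro n
    induction n with
    | zero => simp
    | succ n ih =>
      rw [iteratedDeriv_succ, ih]
      funext s
      have h1 : HasDerivAt (fun s : ℝ => ((c * s : ℝ) : ℂ) * Complex.I) ((c : ℂ) * Complex.I) s := by
        have := (((hasDerivAt_id s).const_mul c).ofReal_comp).mul_const Complex.I
        simpa using this
      have h2 := (h1.cexp).const_mul (((c : ℂ) * Complex.I) ^ n)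
      rw [h2.deriv]; ring
  refine ⟨?_, fun n => ⟨0, |c| ^ n, fun s => ?_⟩⟩
  · apply ContDiff.cexp
    apply ContDiff.mul _ contDiff_const
    exact Complex.ofRealCLM.contDiff.comp (contDiff_const.mul contDiff_id)
  · rw [norm_iteratedFDeriv_eq_norm_iteratedDeriv, key]
    simp only [norm_mul, norm_pow, Complex.norm_exp_ofReal_mul_I, Complex.norm_real, Complex.norm_I, Real.norm_eq_abs, mul_one, pow_zero]
    exact le_rfl

lemma schwartz_lint {E : Type*} [NormedAddCommGroup E] [InnerProductSpace ℝ E] [FiniteDimensional ℝ E]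
    [MeasurableSpace E] [BorelSpace E] (f : SchwartzMap E ℂ) :
    ∫⁻ x, ‖f x‖ₑ ^ 2 = ENNReal.ofReal (∫ x, ‖f x‖ ^ 2) := by
  have hi : Integrable (fun x => ‖f x‖ ^ 2) := (f.memLp 2 volume).integrable_norm_pow (by norm_num)
  rw [ofReal_integral_eq_lintegral_ofReal hi (ae_of_all _ fun x => by positivity)]
  congr 1; funext x
  rw [ENNReal.ofReal_pow (norm_nonneg _), ofReal_norm]

open FourierTransform in
lemma fourier_plancherel {d : ℕ} {t : ℝ} (ht : t ≠ 0) (φ : SchwartzMap (Fin d → ℝ) ℂ) :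
    ∫⁻ x : Fin d → ℝ, ‖∫ y : Fin d → ℝ, Complex.exp (((-(∑ i, x i * y i) / (2 * t) : ℝ) : ℂ) * Complex.I) *
        (Complex.exp ((((∑ i, y i ^ 2) / (4 * t) : ℝ) : ℂ) * Complex.I) * φ y)‖ₑ ^ 2
      = ENNReal.ofReal ((4 * Real.pi * |t|) ^ d) * ∫⁻ y, ‖φ y‖ₑ ^ 2 := by
  have hpi := Real.pi_pos
  let V := EuclideanSpace ℝ (Fin d)
  let L : V ≃L[ℝ] (Fin d → ℝ) := EuclideanSpace.equiv (Fin d) ℝ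
  have hg : Function.HasTemperateGrowth (fun v : V => Complex.exp (((1 / (4 * t) * ‖v‖ ^ 2 : ℝ) : ℂ) * Complex.I)) :=
    (tg_exp (1 / (4 * t))).comp (Function.hasTemperateGrowth_norm_sq V)
  let ψ : SchwartzMap V ℂ := SchwartzMap.smulLeftCLM ℂ
    (fun v : V => Complex.exp (((1 / (4 * t) * ‖v‖ ^ 2 : ℝ) : ℂ) * Complex.I))
    (SchwartzMap.compCLMOfContinuousLinearEquiv ℂ L φ)
  have hψ : ∀ v : V, ψ v = Complex.exp (((1 / (4 * t) * ‖v‖ ^ 2 : ℝ) : ℂ) * Complex.I) * φ (L v) := by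
    intro v
    simp only [ψ]
    rw [SchwartzMap.smulLeftCLM_apply_apply hg]
    rfl
  have hvp := PiLp.volume_preserving_toLp (Fin d)
  have hme := (MeasurableEquiv.toLp 2 (Fin d → ℝ)).measurableEmbedding
  have hF : ∀ x : Fin d → ℝ, ∫ y : Fin d → ℝ, Complex.exp (((-(∑ i, x i * y i) / (2 * t) : ℝ) : ℂ) * Complex.I) *
        (Complex.exp ((((∑ i, y i ^ 2) / (4 * t) : ℝ) : ℂ) * Complex.I) * φ y)
        = (𝓕 ψ) ((1 / (4 * Real.pi * t)) • (WithLp.toLp 2 x : V)) := by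
    intro x
    rw [SchwartzMap.fourier_coe, Real.fourier_eq', ← hvp.integral_comp hme]
    congr 1; funext y
    rw [hψ, smul_eq_mul]
    have e1 : L (WithLp.toLp 2 y) = y := rfl
    rw [e1]
    congr 2
    · congr 2
      rw [inner_smul_right, PiLp.inner_apply]
      simp only [RCLike.inner_apply, conj_trivial]
      field_simp
      norm_num
    · congr 2
      rw [EuclideanSpace.norm_sq_eq]
      simp only [Real.norm_eq_abs, sq_abs]
      rw [div_mul_eq_mul_div, one_mul]
  simp_rw [hF]
  have e2 : ∫⁻ x : Fin d → ℝ, ‖(𝓕 ψ) ((1 / (4 * Real.pi * t)) • (WithLp.toLp 2 x : V))‖ₑ ^ 2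
      = ∫⁻ v : V, ‖(𝓕 ψ) ((1 / (4 * Real.pi * t)) • v)‖ₑ ^ 2 := 
    hvp.lintegral_comp_emb hme (fun v : V => ‖(𝓕 ψ) ((1 / (4 * Real.pi * t)) • v)‖ₑ ^ 2)
  have e3 : ∫⁻ y, ‖φ y‖ₑ ^ 2 = ∫⁻ v : V, ‖ψ v‖ₑ ^ 2 := by
    rw [← hvp.lintegral_comp_emb hme]
    congr 1; funext y
    rw [hψ, enorm_mul, ← ofReal_norm (Complex.exp _), Complex.norm_exp_ofReal_mul_I]
    simp only [ENNReal.ofReal_one, one_mul]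
    rfl
  have hc : (1 / (4 * Real.pi * t)) ≠ 0 := by positivity
  let χ : SchwartzMap V ℂ := SchwartzMap.compCLMOfContinuousLinearEquiv ℂ
    (ContinuousLinearEquiv.smulLeft (Units.mk0 _ hc)) (𝓕 ψ)
  have hχ : ∀ v, χ v = (𝓕 ψ) ((1 / (4 * Real.pi * t)) • v) := fun v => rfl
  rw [e2, e3]
  simp_rw [← hχ]
  rw [schwartz_lint, schwartz_lint]
  simp_rw [hχ]
  have e4 := Measure.integral_comp_smul (volume : Measure V) (fun v : V => ‖(𝓕 ψ) v‖ ^ 2) (1 / (4 * Real.pi * t))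
  rw [e4, SchwartzMap.integral_norm_sq_fourier,
    ← ENNReal.ofReal_mul (by positivity), smul_eq_mul]
  congr 2
  simp only [V, finrank_euclideanSpace, Fintype.card_fin]
  rw [← inv_pow, one_div, inv_inv, abs_pow, abs_mul, abs_of_pos (by positivity : 0 < 4 * Real.pi)]

/-- Unimodular phase. -/
def ee (s : ℝ) : ℂ := Complex.exp ((s : ℂ) * Complex.I)

lemma ee_norm (s : ℝ) : ‖ee s‖ = 1 := Complex.norm_exp_ofReal_mul_I s
lemma ee_enorm (s : ℝ) : ‖ee s‖ₑ = 1 := by rw [← ofReal_norm, ee_norm, ENNReal.ofReal_one]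
lemma ee_add (s r : ℝ) : ee (s + r) = ee s * ee r := by
  unfold ee; rw [← Complex.exp_add]; push_cast; ring_nf
lemma ee_cont : Continuous ee := by unfold ee; fun_prop

lemma SaK_eq {a t z ζ : ℝ} (ht : t ≠ 0) (hz : 0 < z) (hζ : 0 < ζ) :
    SaK a z ζ t = ee (-(Real.sign t * ((a + 1) * Real.pi / 4))) * ee (z ^ 2 / (4 * t)) *
      (((Ker a (2 * |t|) z ζ : ℝ) : ℂ) * ee (ζ ^ 2 / (4 * t))) := by
  have hl : 0 < 2 * |t| := by positivity
  have hx : 0 < z * ζ / (2 * |t|) := by positivity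
  have hb := besselJ_eq ((a - 1) / 2) hx
  have h1 : (1 - a) / 2 = -((a - 1) / 2) := by ring
  have h2 : Complex.exp (Complex.I * ((z ^ 2 + ζ ^ 2 : ℝ) : ℂ) / ((4 * t : ℝ) : ℂ))
      = ee (z ^ 2 / (4 * t)) * ee (ζ ^ 2 / (4 * t)) := by
    rw [← ee_add]; unfold ee; congr 1; push_cast; ring
  have h3 : Complex.exp (-Complex.I * ((Real.sign t : ℝ) : ℂ) * (((a + 1) * Real.pi / 4 : ℝ) : ℂ))
      = ee (-(Real.sign t * ((a + 1) * Real.pi / 4))) := by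
    unfold ee; congr 1; push_cast; ring
  have h4 : (((z * ζ / (2 * |t|)) ^ ((1 - a) / 2) : ℝ) : ℂ) *
    ((besselJ ((a - 1) / 2) (z * ζ / (2 * |t|)) : ℝ) : ℂ)
     = (((2:ℝ) ^ (-((a - 1) / 2)) * bF ((a - 1) / 2) ((z * ζ / (2 * |t|)) ^ 2 / 4) : ℝ) : ℂ) := by
    rw [h1, ← hb]; push_cast; rfl
  have h5 : ((Ker a (2 * |t|) z ζ : ℝ) : ℂ) = ((((2 * |t|) ^ ((a + 1) / 2) : ℝ) : ℂ))⁻¹ *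
      (((2:ℝ) ^ (-((a - 1) / 2)) * bF ((a - 1) / 2) ((z * ζ / (2 * |t|)) ^ 2 / 4) : ℝ) : ℂ) := by
    unfold Ker
    rw [Real.rpow_neg hl.le]
    push_cast; ring
  unfold SaK
  rw [h2, h3, h5, ← h4]
  ring

lemma Sfree_eq {d : ℕ} {t : ℝ} (ht : t ≠ 0) (x y : Fin d → ℝ) :
    Sfree d x y t = (4 * (Real.pi : ℂ) * Complex.I * (t : ℂ)) ^ (-(d : ℂ) / 2) *
      ee ((∑ i, x i ^ 2) / (4 * t)) *
      (ee (-(∑ i, x i * y i) / (2 * t)) * ee ((∑ i, y i ^ 2) / (4 * t))) := by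
  unfold Sfree
  rw [← ee_add, mul_assoc (_ ^ _), ← ee_add]
  unfold ee
  congr 2
  have : (∑ i, (x i - y i) ^ 2) = (∑ i, x i ^ 2) - 2 * (∑ i, x i * y i) + ∑ i, y i ^ 2 := by
    rw [Finset.mul_sum, ← Finset.sum_sub_distrib, ← Finset.sum_add_distrib]
    exact Finset.sum_congr rfl fun i _ => by ring
  rw [this, mul_comm Complex.I, mul_div_right_comm, ← Complex.ofReal_div]
  congr 2
  field_simp
  ring

lemma K_norm {d : ℕ} {t : ℝ} (ht : t ≠ 0) :
    ‖(4 * (Real.pi : ℂ) * Complex.I * (t : ℂ)) ^ (-(d : ℂ) / 2)‖ₑ ^ 2 *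
      ENNReal.ofReal ((4 * Real.pi * |t|) ^ d) = 1 := by
  have hpi := Real.pi_pos
  have h0 : (4 * (Real.pi : ℂ) * Complex.I * (t : ℂ)) ≠ 0 := by
    have : (Real.pi : ℂ) ≠ 0 := by exact_mod_cast hpi.ne'
    have h' : (t : ℂ) ≠ 0 := by exact_mod_cast ht
    simp [this, h']
  have hw : -(d : ℂ) / 2 = ((-(d : ℝ) / 2 : ℝ) : ℂ) := by push_cast; ring
  have hn : ‖(4 * (Real.pi : ℂ) * Complex.I * (t : ℂ))‖ = 4 * Real.pi * |t| := by
    simp [abs_of_pos hpi]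
  rw [← ofReal_norm, ← ENNReal.ofReal_pow (norm_nonneg _), ← ENNReal.ofReal_mul (by positivity),
    Complex.norm_cpow_of_ne_zero h0, hw, Complex.ofReal_re, Complex.ofReal_im, hn]
  have hp : 0 < 4 * Real.pi * |t| := by positivity
  simp only [mul_zero, Real.exp_zero, div_one]
  rw [← Real.rpow_natCast _ 2, ← Real.rpow_mul hp.le, ← Real.rpow_natCast _ d, ← Real.rpow_add hp]
  simp

lemma schwartz_bound {d : ℕ} (u : SchwartzMap ((Fin d → ℝ) × ℝ) ℂ) (N M : ℕ) :
    ∃ C > 0, ∀ y ζ, ‖u (y, ζ)‖ ≤ C * ((1 + ‖y‖) ^ N)⁻¹ * ((1 + ζ ^ 2) ^ M)⁻¹ := by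
  refine ⟨2 ^ (N + 2 * M) * ((Finset.Iic (N + 2 * M, 0)).sup fun m => SchwartzMap.seminorm ℝ m.1 m.2) u + 1, by positivity, fun y ζ => ?_⟩
  have h := SchwartzMap.one_add_le_sup_seminorm_apply (𝕜 := ℝ) (m := (N + 2 * M, 0)) (k := N + 2 * M) (n := 0) le_rfl le_rfl u (y, ζ)
  rw [norm_iteratedFDeriv_zero] at h
  have h1 : (1 + ‖y‖) ^ N ≤ (1 + ‖(y, ζ)‖) ^ N := by
    gcongr; exact norm_fst_le (y, ζ)
  have h2 : (1 + ζ ^ 2) ^ M ≤ (1 + ‖(y, ζ)‖) ^ (2 * M) := by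
    rw [pow_mul]
    gcongr
    have : |ζ| ≤ ‖(y, ζ)‖ := norm_snd_le (y, ζ)
    have h0 := abs_nonneg ζ
    rw [← sq_abs]
    nlinarith
  rw [mul_assoc, ← mul_inv, ← div_eq_mul_inv, le_div_iff₀ (by positivity)]
  calc ‖u (y, ζ)‖ * ((1 + ‖y‖) ^ N * (1 + ζ ^ 2) ^ M) ≤ ‖u (y, ζ)‖ * ((1 + ‖(y, ζ)‖) ^ N * (1 + ‖(y, ζ)‖) ^ (2 * M)) := by gcongr
    _ = (1 + ‖(y, ζ)‖) ^ (N + 2 * M) * ‖u (y, ζ)‖ := by rw [pow_add]; ring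
    _ ≤ _ := by linarith

lemma int_y (d : ℕ) : Integrable (fun y : Fin d → ℝ => ((1 + ‖y‖) ^ (d + 1))⁻¹) := by
  have := integrable_one_add_norm (E := Fin d → ℝ) (μ := volume) (r := ((d + 1 : ℕ) : ℝ)) (by simp)
  refine this.congr (ae_of_all _ fun y => ?_)
  simp only
  rw [Real.rpow_neg (by positivity), Real.rpow_natCast]

lemma int_zeta {a : ℝ} (ha : -1 < a) : ∃ M : ℕ, Integrable (fun ζ : ℝ => ((1 + ζ ^ 2) ^ M)⁻¹) (mu a) := by
  obtain ⟨M, hM⟩ := exists_nat_gt (a + 1)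
  refine ⟨M, ?_⟩
  rw [integrable_mu_iff]
  have hmeas : Measurable (fun ζ : ℝ => ζ ^ a • ((1 + ζ ^ 2) ^ M)⁻¹) := by
    simp only [smul_eq_mul]; fun_prop
  rw [← Set.Ioc_union_Ioi_eq_Ioi (zero_le_one (α := ℝ))]
  refine IntegrableOn.union ?_ ?_
  · have h1 : IntegrableOn (fun ζ : ℝ => ζ ^ a) (Set.Ioc 0 1) := by
      rw [← intervalIntegrable_iff_integrableOn_Ioc_of_le zero_le_one]
      exact intervalIntegral.intervalIntegrable_rpow' ha
    refine h1.mono' hmeas.aestronglyMeasurable ?_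
    filter_upwards [ae_restrict_mem measurableSet_Ioc] with ζ hζ
    have : 0 ≤ ζ ^ a := Real.rpow_nonneg hζ.1.le _
    rw [smul_eq_mul, Real.norm_of_nonneg (by positivity)]
    apply mul_le_of_le_one_right this
    apply inv_le_one_of_one_le₀
    apply one_le_pow₀
    nlinarith [sq_nonneg ζ]
  · have h1 : IntegrableOn (fun ζ : ℝ => ζ ^ (a - 2 * M)) (Set.Ioi 1) :=
      integrableOn_Ioi_rpow_of_lt (by nlinarith [(Nat.cast_nonneg M : (0:ℝ) ≤ M)]) one_pos
    refine h1.mono' hmeas.aestronglyMeasurable ?_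
    filter_upwards [ae_restrict_mem measurableSet_Ioi] with ζ hζ
    have hζ0 : 0 < ζ := lt_trans one_pos hζ
    have : 0 ≤ ζ ^ a := Real.rpow_nonneg hζ0.le _
    rw [smul_eq_mul, Real.norm_of_nonneg (by positivity), Real.rpow_sub hζ0, div_eq_mul_inv]
    gcongr
    have : ζ ^ (2 * (M : ℝ)) = (ζ ^ 2) ^ M := by
      rw [← pow_mul, ← Real.rpow_natCast]; norm_num
    rw [this]
    gcongr
    linarith

/-- Inner Fourier integral. -/
def ww {d : ℕ} (t : ℝ) (u : SchwartzMap ((Fin d → ℝ) × ℝ) ℂ) (x : Fin d → ℝ) (ζ : ℝ) : ℂ :=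
  ∫ y : Fin d → ℝ, ee (-(∑ i, x i * y i) / (2 * t)) * (ee ((∑ i, y i ^ 2) / (4 * t)) * u (y, ζ))

/-- Hankel transform of the inner integral. -/
def TT {d : ℕ} (a t : ℝ) (u : SchwartzMap ((Fin d → ℝ) × ℝ) ℂ) (x : Fin d → ℝ) (z : ℝ) : ℂ :=
  ∫ ζ, ((Ker a (2 * |t|) z ζ : ℝ) : ℂ) * (ee (ζ ^ 2 / (4 * t)) * ww t u x ζ) ∂mu a

lemma ww_meas {d : ℕ} (t : ℝ) (u : SchwartzMap ((Fin d → ℝ) × ℝ) ℂ) :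
    StronglyMeasurable (fun p : (Fin d → ℝ) × ℝ => ww t u p.1 p.2) := by
  unfold ww
  have hc : Continuous (fun q : ((Fin d → ℝ) × ℝ) × (Fin d → ℝ) =>
      ee (-(∑ i, q.1.1 i * q.2 i) / (2 * t)) * (ee ((∑ i, q.2 i ^ 2) / (4 * t)) * u (q.2, q.1.2))) := by
    have h1 := ee_cont
    have h2 := u.continuous
    fun_prop
  exact hc.stronglyMeasurable.integral_prod_right

lemma TT_meas {d : ℕ} {a : ℝ} (ha : -1 < a) (t : ℝ) (u : SchwartzMap ((Fin d → ℝ) × ℝ) ℂ) :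
    StronglyMeasurable (fun p : (Fin d → ℝ) × ℝ => TT a t u p.1 p.2) := by
  unfold TT
  have h1 : StronglyMeasurable (fun q : ((Fin d → ℝ) × ℝ) × ℝ =>
      ((Ker a (2 * |t|) q.1.2 q.2 : ℝ) : ℂ) * (ee (q.2 ^ 2 / (4 * t)) * ww t u q.1.1 q.2)) := by
    refine StronglyMeasurable.mul ?_ (StronglyMeasurable.mul ?_ ?_)
    · have := (Ker_cont ha (2 * |t|)).comp (f := fun q : ((Fin d → ℝ) × ℝ) × ℝ => (q.1.2, q.2)) (by fun_prop)
      exact (Complex.continuous_ofReal.comp this).stronglyMeasurable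
    · have h1 := ee_cont
      exact Continuous.stronglyMeasurable (by fun_prop)
    · exact (ww_meas t u).comp_measurable (g := fun q : ((Fin d → ℝ) × ℝ) × ℝ => (q.1.1, q.2)) (by fun_prop)
  exact h1.integral_prod_right

lemma ww_bound {d : ℕ} (t : ℝ) (u : SchwartzMap ((Fin d → ℝ) × ℝ) ℂ) (M : ℕ) :
    ∃ C > 0, ∀ x ζ, ‖ww t u x ζ‖ ≤ C * ((1 + ζ ^ 2) ^ M)⁻¹ := by
  obtain ⟨C, hC, hb⟩ := schwartz_bound u (d + 1) M
  have hI : 0 ≤ ∫ y : Fin d → ℝ, ((1 + ‖y‖) ^ (d + 1))⁻¹ := integral_nonneg fun y => by positivity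
  refine ⟨C * (∫ y : Fin d → ℝ, ((1 + ‖y‖) ^ (d + 1))⁻¹) + 1, by positivity, fun x ζ => ?_⟩
  have : ‖ww t u x ζ‖ ≤ ∫ y : Fin d → ℝ, C * ((1 + ‖y‖) ^ (d + 1))⁻¹ * ((1 + ζ ^ 2) ^ M)⁻¹ := by
    refine norm_integral_le_of_norm_le (((int_y d).const_mul C).mul_const _) (ae_of_all _ fun y => ?_)
    rw [norm_mul, norm_mul, ee_norm, ee_norm, one_mul, one_mul]
    exact hb y ζ
  rw [integral_mul_const, integral_const_mul] at this
  refine this.trans ?_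
  gcongr
  linarith

lemma TT_plancherel {d : ℕ} {a t : ℝ} (ha : -1 < a) (ht : t ≠ 0)
    (u : SchwartzMap ((Fin d → ℝ) × ℝ) ℂ) (x : Fin d → ℝ) :
    ∫⁻ z, ‖TT a t u x z‖ₑ ^ 2 ∂mu a = ∫⁻ ζ, ‖ww t u x ζ‖ₑ ^ 2 ∂mu a := by
  obtain ⟨M, hM⟩ := int_zeta ha
  obtain ⟨C, hC, hb⟩ := ww_bound t u (M + 1)
  have hm : StronglyMeasurable (fun ζ => ee (ζ ^ 2 / (4 * t)) * ww t u x ζ) := by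
    refine StronglyMeasurable.mul ?_ ?_
    · have h1 := ee_cont
      exact Continuous.stronglyMeasurable (by fun_prop)
    · exact (ww_meas t u).comp_measurable (g := fun ζ : ℝ => (x, ζ)) (by fun_prop)
  have hn : ∀ ζ, ‖ee (ζ ^ 2 / (4 * t)) * ww t u x ζ‖ ≤ C * ((1 + ζ ^ 2) ^ (M + 1))⁻¹ := by
    intro ζ
    rw [norm_mul, ee_norm, one_mul]; exact hb x ζ
  have h1 : Integrable (fun ζ => ((1 + ζ ^ 2 : ℝ) : ℂ) * (ee (ζ ^ 2 / (4 * t)) * ww t u x ζ)) (mu a) := by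
    refine (hM.const_mul C).mono' ?_ (ae_of_all _ fun ζ => ?_)
    · refine (StronglyMeasurable.mul ?_ hm).aestronglyMeasurable
      exact Continuous.stronglyMeasurable (by fun_prop)
    · have h0 : 0 < 1 + ζ ^ 2 := by positivity
      rw [norm_mul, Complex.norm_real, Real.norm_of_nonneg h0.le]
      calc _ ≤ (1 + ζ ^ 2) * (C * ((1 + ζ ^ 2) ^ (M + 1))⁻¹) := by gcongr; exact hn ζ
        _ = C * ((1 + ζ ^ 2) ^ M)⁻¹ := by field_simp; ring
  have h2 : MemLp (fun ζ => ee (ζ ^ 2 / (4 * t)) * ww t u x ζ) 2 (mu a) := by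
    rw [memLp_two_iff_integrable_sq_norm hm.aestronglyMeasurable]
    refine (hM.const_mul (C ^ 2)).mono' ?_ (ae_of_all _ fun ζ => ?_)
    · exact (hm.norm.pow 2).aestronglyMeasurable
    · have h0 : 1 ≤ 1 + ζ ^ 2 := by nlinarith [sq_nonneg ζ]
      rw [Real.norm_of_nonneg (by positivity)]
      calc _ ≤ (C * ((1 + ζ ^ 2) ^ (M + 1))⁻¹) ^ 2 := by gcongr; exact hn ζ
        _ = C ^ 2 * ((1 + ζ ^ 2) ^ (2 * (M + 1)))⁻¹ := by rw [mul_pow, inv_pow, ← pow_mul, mul_comm 2]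
        _ ≤ _ := by
          gcongr
          omega
  have := hankel_plancherel ha (l := 2 * |t|) (by positivity) h2 h1
  unfold TT
  rw [this]
  congr 1; funext ζ
  rw [enorm_mul, ee_enorm, one_mul]

lemma slice {d : ℕ} (u : SchwartzMap ((Fin d → ℝ) × ℝ) ℂ) (ζ : ℝ) :
    ∃ φ : SchwartzMap (Fin d → ℝ) ℂ, ∀ y, φ y = u (y, ζ) := by
  have hg : Function.HasTemperateGrowth (fun y : Fin d → ℝ => (y, ζ)) := by
    have h1 := (ContinuousLinearMap.inl ℝ (Fin d → ℝ) ℝ).hasTemperateGrowth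
    have h2 := h1.add (Function.HasTemperateGrowth.const (E := Fin d → ℝ) ((0, ζ) : (Fin d → ℝ) × ℝ))
    convert h2 using 1
    funext y
    simp
  have ha : AntilipschitzWith 1 (fun y : Fin d → ℝ => (y, ζ)) := by
    refine AntilipschitzWith.of_le_mul_dist fun y y' => ?_
    simp [Prod.dist_eq]
  exact ⟨SchwartzMap.compCLMOfAntilipschitz ℂ hg ha u, fun y => rfl⟩

lemma ww_plancherel {d : ℕ} {t : ℝ} (ht : t ≠ 0) (u : SchwartzMap ((Fin d → ℝ) × ℝ) ℂ) (ζ : ℝ) :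
    ∫⁻ x, ‖ww t u x ζ‖ₑ ^ 2 = ENNReal.ofReal ((4 * Real.pi * |t|) ^ d) * ∫⁻ y, ‖u (y, ζ)‖ₑ ^ 2 := by
  obtain ⟨φ, hφ⟩ := slice u ζ
  have := fourier_plancherel ht φ
  simp_rw [hφ] at this
  exact this

lemma SK_form {d : ℕ} {a t : ℝ} (ht : t ≠ 0) (u : SchwartzMap ((Fin d → ℝ) × ℝ) ℂ)
    (X : (Fin d → ℝ) × ℝ) (hX : 0 < X.2) :
    (fun Y => SK d a X Y t * u Y) =ᵐ[ωa d a] fun Y =>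
      (ee (-(Real.sign t * ((a + 1) * Real.pi / 4))) * ee (X.2 ^ 2 / (4 * t)) *
       ((4 * (Real.pi : ℂ) * Complex.I * (t : ℂ)) ^ (-(d : ℂ) / 2) * ee ((∑ i, X.1 i ^ 2) / (4 * t)))) *
      ((((Ker a (2 * |t|) X.2 Y.2 : ℝ) : ℂ) * ee (Y.2 ^ 2 / (4 * t))) *
       (ee (-(∑ i, X.1 i * Y.1 i) / (2 * t)) * (ee ((∑ i, Y.1 i ^ 2) / (4 * t)) * u Y))) := by
  have h : ∀ᵐ Y ∂(ωa d a), 0 < Y.2 :=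
    (Measure.quasiMeasurePreserving_snd (μ := (volume : Measure (Fin d → ℝ))) (ν := mu a)).ae (ae_mu_pos a)
  filter_upwards [h] with Y hY
  unfold SK
  rw [SaK_eq ht hX hY, Sfree_eq ht]
  ring

lemma main_int {d : ℕ} {a : ℝ} (ha : -1 < a) (t : ℝ) (u : SchwartzMap ((Fin d → ℝ) × ℝ) ℂ)
    (x : Fin d → ℝ) (z : ℝ) :
    Integrable (fun Y : (Fin d → ℝ) × ℝ => (((Ker a (2 * |t|) z Y.2 : ℝ) : ℂ) * ee (Y.2 ^ 2 / (4 * t))) *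
       (ee (-(∑ i, x i * Y.1 i) / (2 * t)) * (ee ((∑ i, Y.1 i ^ 2) / (4 * t)) * u Y))) (ωa d a) := by
  obtain ⟨M, hM⟩ := int_zeta ha
  obtain ⟨C, hC, hb⟩ := schwartz_bound u (d + 1) (M + 1)
  obtain ⟨D, hD, hk⟩ := Ker_bound ha (2 * |t|)
  have hint : Integrable (fun Y : (Fin d → ℝ) × ℝ => ((1 + ‖Y.1‖) ^ (d + 1))⁻¹ * ((1 + Y.2 ^ 2) ^ M)⁻¹) (ωa d a) :=
    (int_y d).mul_prod hM
  refine (hint.const_mul (D * (1 + z ^ 2) * C)).mono' ?_ (ae_of_all _ fun Y => ?_)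
  · apply Continuous.aestronglyMeasurable
    have h1 := ee_cont
    have h2 := u.continuous
    have h3 := (Ker_cont ha (2 * |t|)).comp (f := fun Y : (Fin d → ℝ) × ℝ => (z, Y.2)) (by fun_prop)
    have h4 : Continuous (fun Y : (Fin d → ℝ) × ℝ => Ker a (2 * |t|) z Y.2) := h3
    fun_prop
  · rw [norm_mul, norm_mul, norm_mul, norm_mul, ee_norm, ee_norm, ee_norm, one_mul, one_mul, mul_one,
      Complex.norm_real, Real.norm_eq_abs]
    have h1 := hk z Y.2
    have h2 := hb Y.1 Y.2
    calc _ ≤ (D * ((1 + z ^ 2) * (1 + Y.2 ^ 2))) * (C * ((1 + ‖Y.1‖) ^ (d + 1))⁻¹ * ((1 + Y.2 ^ 2) ^ (M + 1))⁻¹) := by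
          gcongr
      _ = _ := by field_simp; ring

lemma int_eq {d : ℕ} {a t : ℝ} (ha : -1 < a) (ht : t ≠ 0) (u : SchwartzMap ((Fin d → ℝ) × ℝ) ℂ)
    (X : (Fin d → ℝ) × ℝ) (hX : 0 < X.2) :
    ‖∫ Y, SK d a X Y t * u Y ∂(ωa d a)‖ₑ ^ 2 =
      ‖(4 * (Real.pi : ℂ) * Complex.I * (t : ℂ)) ^ (-(d : ℂ) / 2)‖ₑ ^ 2 * ‖TT a t u X.1 X.2‖ₑ ^ 2 := by
  rw [integral_congr_ae (SK_form ht u X hX), integral_const_mul]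
  have hs : ∫ Y : (Fin d → ℝ) × ℝ, (((Ker a (2 * |t|) X.2 Y.2 : ℝ) : ℂ) * ee (Y.2 ^ 2 / (4 * t))) *
       (ee (-(∑ i, X.1 i * Y.1 i) / (2 * t)) * (ee ((∑ i, Y.1 i ^ 2) / (4 * t)) * u Y)) ∂(ωa d a)
       = TT a t u X.1 X.2 := by
    have h := main_int ha t u X.1 X.2
    have hω : ωa d a = (volume : Measure (Fin d → ℝ)).prod (mu a) := rfl
    rw [hω] at h ⊢
    rw [integral_prod_symm _ h]
    unfold TT ww
    congr 1; funext ζ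
    rw [← mul_assoc, ← integral_const_mul]
  rw [hs]
  simp only [enorm_mul, ee_enorm, one_mul, mul_one, mul_pow]

lemma mass_lint {d : ℕ} {a t : ℝ} (ha : -1 < a) (ht : t ≠ 0) (u : SchwartzMap ((Fin d → ℝ) × ℝ) ℂ) :
    ∫⁻ X, ‖∫ Y, SK d a X Y t * u Y ∂(ωa d a)‖ₑ ^ 2 ∂(ωa d a) = ∫⁻ X, ‖u X‖ₑ ^ 2 ∂(ωa d a) := by
  have h : ∀ᵐ Y ∂(ωa d a), 0 < Y.2 :=
    (Measure.quasiMeasurePreserving_snd (μ := (volume : Measure (Fin d → ℝ))) (ν := mu a)).ae (ae_mu_pos a)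
  have hT : Measurable (fun p : (Fin d → ℝ) × ℝ => ‖TT a t u p.1 p.2‖ₑ ^ 2) :=
    (TT_meas ha t u).measurable.enorm.pow_const 2
  have hw : Measurable (fun p : (Fin d → ℝ) × ℝ => ‖ww t u p.1 p.2‖ₑ ^ 2) :=
    (ww_meas t u).measurable.enorm.pow_const 2
  have hu : Measurable (fun p : (Fin d → ℝ) × ℝ => ‖u p‖ₑ ^ 2) :=
    u.continuous.measurable.enorm.pow_const 2
  rw [lintegral_congr_ae (h.mono fun X hX => int_eq ha ht u X hX), lintegral_const_mul _ hT]
  have hω : ωa d a = (volume : Measure (Fin d → ℝ)).prod (mu a) := rfl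
  rw [hω, lintegral_prod _ hT.aemeasurable]
  simp_rw [TT_plancherel ha ht u]
  rw [lintegral_lintegral_swap hw.aemeasurable]
  simp_rw [ww_plancherel ht u]
  have hu2 : Measurable fun ζ : ℝ => ∫⁻ y : Fin d → ℝ, ‖u (y, ζ)‖ₑ ^ 2 := hu.lintegral_prod_left'
  rw [lintegral_const_mul _ hu2, ← mul_assoc, K_norm ht, one_mul, lintegral_prod_symm _ hu.aemeasurable]

/-- For `d ≥ 1`, `a > -1`, `t ≠ 0` and Schwartz data `u₀`, the integral
`𝕊_a(t)u₀(X) = ∫ 𝕊_a(X,Y,t) u₀(Y) dω_a(Y)` converges absolutely for every `X` in the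
half-space, and conservation of mass holds:
`‖𝕊_a(t)u₀‖_{L²_a} = ‖u₀‖_{L²_a}`. -/
theorem schrodinger_bessel_mass_conservation
    (d : ℕ) (hd : 1 ≤ d) (a : ℝ) (ha : -1 < a) (t : ℝ) (ht : t ≠ 0)
    (u₀ : SchwartzMap ((Fin d → ℝ) × ℝ) ℂ) :
    (∀ X : (Fin d → ℝ) × ℝ, 0 < X.2 → Integrable (fun Y => SK d a X Y t * u₀ Y) (ωa d a)) ∧
    eLpNorm (fun X => ∫ Y, SK d a X Y t * u₀ Y ∂(ωa d a)) 2 (ωa d a)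
      = eLpNorm (fun X => u₀ X) 2 (ωa d a) := by
  refine ⟨fun X hX => ?_, ?_⟩
  · exact ((main_int ha t u₀ X.1 X.2).const_mul _).congr (SK_form ht u₀ X hX).symm
  · rw [eLpNorm_eq_lintegral_rpow_enorm_toReal (by norm_num) (by norm_num),
      eLpNorm_eq_lintegral_rpow_enorm_toReal (by norm_num) (by norm_num)]
    have := mass_lint ha ht u₀
    simp only [ENNReal.toReal_ofNat, ENNReal.rpow_ofNat]
    rw [this]

end
end

section
/- Let b > 0 and μ ∈ ℂ with 0 < Re μ < 1. Then the improper integrals lim_{M→∞} ∫₀^M y^{μ−1} e^{iby} dy and lim_{M→∞} ∫₀^M y^{μ−1} e^{−iby} dy exist and equal Γ(μ)·b^{−μ}·e^{iμπ/2} and Γ(μ)·b^{−μ}·e^{−iμπ/2} respectively. -/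
open MeasureTheory Filter Complex
open scoped Topology

noncomputable section

def opG (μ c : ℂ) (y : ℝ) : ℂ :=
  Complex.exp ((μ - 1) * ((Real.log y : ℝ) : ℂ)) * Complex.exp (-c * (y : ℂ))

def opF (μ c z : ℂ) : ℂ := Complex.exp (μ * z) * Complex.exp (-c * Complex.exp z)

lemma opG_cpow (μ c : ℂ) {y : ℝ} (hy : 0 < y) :
    opG μ c y = (y : ℂ) ^ (μ - 1) * Complex.exp (-c * (y : ℂ)) := by
  rw [opG, Complex.cpow_def_of_ne_zero (by exact_mod_cast hy.ne'), Complex.ofReal_log hy.le,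
    mul_comm (μ - 1)]

lemma opG_intervalIntegrable (μ c : ℂ) (h₁ : 0 < μ.re) (M : ℝ) (hM : 0 ≤ M) :
    IntervalIntegrable (opG μ c) volume 0 M := by
  have h : IntervalIntegrable (fun y : ℝ => (y : ℂ) ^ (μ - 1) * Complex.exp (-c * (y : ℂ)))
      volume 0 M := by
    apply IntervalIntegrable.mul_continuousOn
    · apply intervalIntegral.intervalIntegrable_cpow'
      simp; linarith
    · fun_prop
  refine h.congr ?_
  intro y hy
  rw [Set.uIoc_of_le hM] at hy
  exact (opG_cpow μ c hy.1).symm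

lemma opG_subst (μ c : ℂ) (R : ℝ) :
    (∫ x in (-R)..R, opF μ c x) = ∫ y in (Real.exp (-R))..(Real.exp R), opG μ c y := by
  rw [← intervalIntegral.integral_deriv_smul_comp'' (f := Real.exp) (f' := Real.exp)
    (g := opG μ c) Real.continuous_exp.continuousOn
    (fun x _ => (Real.hasDerivAt_exp x).hasDerivWithinAt) Real.continuous_exp.continuousOn]
  · refine intervalIntegral.integral_congr fun x _ => ?_
    simp only [opF, opG, Function.comp, Real.log_exp, Complex.real_smul, Complex.ofReal_exp]
    have : Complex.exp (μ * x) = Complex.exp x * Complex.exp ((μ - 1) * x) := by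
      rw [← Complex.exp_add]; congr 1; ring
    rw [this, mul_assoc]
  · intro y hy
    obtain ⟨x, _, rfl⟩ := hy
    apply ContinuousAt.continuousWithinAt
    unfold opG
    have : ContinuousAt Real.log (Real.exp x) := Real.continuousAt_log (Real.exp_pos x).ne'
    fun_prop

lemma opG_diff (μ c : ℂ) (h₁ : 0 < μ.re) :
    Tendsto (fun R : ℝ => (∫ y in (0:ℝ)..(Real.exp R), opG μ c y) - ∫ x in (-R)..R, opF μ c x)
      atTop (𝓝 0) := by
  have key : ∀ R : ℝ, (∫ y in (0:ℝ)..(Real.exp R), opG μ c y) - ∫ x in (-R)..R, opF μ c x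
      = ∫ y in (0:ℝ)..(Real.exp (-R)), opG μ c y := by
    intro R
    have i1 := opG_intervalIntegrable μ c h₁ _ (Real.exp_pos R).le
    have i2 := opG_intervalIntegrable μ c h₁ _ (Real.exp_pos (-R)).le
    rw [opG_subst, ← intervalIntegral.integral_add_adjacent_intervals i2 (i2.symm.trans i1)]
    ring
  simp_rw [key]
  have hc := intervalIntegral.continuousOn_primitive_interval'
    (opG_intervalIntegrable μ c h₁ 1 zero_le_one) (a := 0) (by simp)
  have h0 := hc 0 (by simp)
  rw [ContinuousWithinAt, intervalIntegral.integral_same] at h0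
  refine h0.comp ?_
  refine tendsto_nhdsWithin_iff.2 ⟨Real.tendsto_exp_neg_atTop_nhds_zero, ?_⟩
  filter_upwards [eventually_ge_atTop 0] with R hR
  rw [Set.uIcc_of_le zero_le_one]
  exact ⟨(Real.exp_pos _).le, by simpa using hR⟩

lemma opG_gamma (b : ℝ) (hb : 0 < b) (μ : ℂ) (h₁ : 0 < μ.re) :
    Tendsto (fun R : ℝ => ∫ y in (0:ℝ)..(Real.exp R), opG μ b y) atTop
      (𝓝 (Complex.Gamma μ * Complex.exp (-μ * ((Real.log b : ℝ) : ℂ)))) := by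
  have hI : ∫ y in Set.Ioi (0:ℝ), opG μ b y =
      Complex.Gamma μ * Complex.exp (-μ * ((Real.log b : ℝ) : ℂ)) := by
    have := Complex.integral_cpow_mul_exp_neg_mul_Ioi h₁ hb
    rw [mul_comm (Complex.Gamma μ)]
    convert this using 1
    · refine setIntegral_congr_fun measurableSet_Ioi fun y hy => ?_
      simp only [opG_cpow μ b hy, neg_mul]
    · congr 1
      rw [Complex.cpow_def_of_ne_zero (by simpa using hb.ne')]
      congr 1
      rw [show (1 / (b:ℂ)) = ((b⁻¹ : ℝ) : ℂ) by push_cast; simp,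
        ← Complex.ofReal_log (by positivity), Real.log_inv]
      push_cast; ring
  rw [← hI]
  refine intervalIntegral_tendsto_integral_Ioi 0 ?_ Real.tendsto_exp_atTop
  refine MeasureTheory.Integrable.of_integral_ne_zero ?_
  rw [hI]
  exact mul_ne_zero (Complex.Gamma_ne_zero_of_re_pos h₁) (Complex.exp_ne_zero _)

lemma opF_norm (b : ℝ) (μ : ℂ) (x t : ℝ) :
    ‖opF μ b (x + t * I)‖ =
      Real.exp (μ.re * x - μ.im * t) * Real.exp (-(b * Real.exp x * Real.cos t)) := by
  rw [opF, norm_mul, Complex.norm_exp, Complex.norm_exp]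
  congr 2
  · simp
  · simp [Complex.exp_re]; ring

lemma opF_left (b : ℝ) (hb : 0 < b) (μ : ℂ) (h₁ : 0 < μ.re) :
    Tendsto (fun R : ℝ => ∫ t in (0:ℝ)..(Real.pi / 2), opF μ b ((-R : ℝ) + t * I)) atTop (𝓝 0) := by
  have hp := Real.pi_pos
  have hlim : Tendsto (fun R : ℝ => Real.exp (-(μ.re * R)) * Real.exp (|μ.im| * (Real.pi / 2))
      * |Real.pi / 2 - 0|) atTop (𝓝 0) := by
    have : Tendsto (fun R : ℝ => Real.exp (-(μ.re * R))) atTop (𝓝 0) :=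
      Real.tendsto_exp_neg_atTop_nhds_zero.comp (tendsto_id.const_mul_atTop h₁)
    simpa using (this.mul_const (Real.exp (|μ.im| * (Real.pi / 2)))).mul_const |Real.pi / 2 - 0|
  refine squeeze_zero_norm (fun R => ?_) hlim
  refine intervalIntegral.norm_integral_le_of_norm_le_const fun t ht => ?_
  rw [Set.uIoc_of_le (by positivity)] at ht
  rw [opF_norm, ← Real.exp_add, ← Real.exp_add]
  apply Real.exp_le_exp.2
  have hc : 0 ≤ Real.cos t := Real.cos_nonneg_of_mem_Icc ⟨by linarith [ht.1], ht.2⟩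
  have h3 : 0 ≤ b * Real.exp (-R) * Real.cos t := by positivity
  have h4 : -(μ.im * t) ≤ |μ.im| * (Real.pi / 2) := by
    calc -(μ.im * t) ≤ |μ.im * t| := neg_le_abs _
      _ = |μ.im| * t := by rw [abs_mul, abs_of_pos ht.1]
      _ ≤ _ := by gcongr; exact ht.2
  linarith

lemma op_jordan (A : ℝ) (hA : 0 < A) :
    ∫ t in (0:ℝ)..(Real.pi / 2), Real.exp (-(A * (1 - 2 / Real.pi * t))) ≤ Real.pi / (2 * A) := by
  have hp := Real.pi_pos
  have hd : ∀ t ∈ Set.uIcc (0:ℝ) (Real.pi / 2),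
      HasDerivAt (fun t => Real.pi / (2 * A) * Real.exp (-(A * (1 - 2 / Real.pi * t))))
        (Real.exp (-(A * (1 - 2 / Real.pi * t)))) t := by
    intro t _
    have h1 : HasDerivAt (fun t : ℝ => -(A * (1 - 2 / Real.pi * t))) (A * (2 / Real.pi)) t := by
      have := ((((hasDerivAt_id t).const_mul (2 / Real.pi)).const_sub 1).const_mul A).neg
      refine this.congr_deriv ?_
      ring
    refine (h1.exp.const_mul (Real.pi / (2 * A))).congr_deriv ?_
    field_simp
  rw [intervalIntegral.integral_eq_sub_of_hasDerivAt hd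
    (Continuous.intervalIntegrable (by fun_prop) _ _)]
  have : (1 - 2 / Real.pi * (Real.pi / 2)) = 0 := by field_simp; ring
  rw [this]
  have : 0 < Real.pi / (2 * A) * Real.exp (-(A * (1 - 2 / Real.pi * 0))) := by positivity
  simp only [mul_zero, neg_zero, Real.exp_zero, mul_one] at this ⊢
  linarith

lemma opF_right (b : ℝ) (hb : 0 < b) (μ : ℂ) (h₂ : μ.re < 1) :
    Tendsto (fun R : ℝ => ∫ t in (0:ℝ)..(Real.pi / 2), opF μ b (R + t * I)) atTop (𝓝 0) := by
  have hp := Real.pi_pos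
  have hlim : Tendsto (fun R : ℝ => Real.exp (-((1 - μ.re) * R)) *
      (Real.exp (|μ.im| * (Real.pi / 2)) * (Real.pi / (2 * b)))) atTop (𝓝 0) := by
    have : Tendsto (fun R : ℝ => Real.exp (-((1 - μ.re) * R))) atTop (𝓝 0) :=
      Real.tendsto_exp_neg_atTop_nhds_zero.comp (tendsto_id.const_mul_atTop (sub_pos.2 h₂))
    simpa using this.mul_const (Real.exp (|μ.im| * (Real.pi / 2)) * (Real.pi / (2 * b)))
  refine squeeze_zero_norm (fun R => ?_) hlim
  have hb1 : ‖∫ t in (0:ℝ)..(Real.pi / 2), opF μ b (R + t * I)‖ ≤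
      ∫ t in (0:ℝ)..(Real.pi / 2), Real.exp (μ.re * R) * Real.exp (|μ.im| * (Real.pi / 2)) *
        Real.exp (-((b * Real.exp R) * (1 - 2 / Real.pi * t))) := by
    refine intervalIntegral.norm_integral_le_of_norm_le (by positivity)
      (Eventually.of_forall fun t ht => ?_) (Continuous.intervalIntegrable (by fun_prop) _ _)
    rw [opF_norm]
    simp only [← Real.exp_add]
    have h4 : -(μ.im * t) ≤ |μ.im| * (Real.pi / 2) := by
      calc -(μ.im * t) ≤ |μ.im * t| := neg_le_abs _
        _ = |μ.im| * t := by rw [abs_mul, abs_of_pos ht.1]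
        _ ≤ _ := by gcongr; exact ht.2
    have h5 := Real.one_sub_mul_le_cos ht.1.le ht.2
    have h6 := mul_le_mul_of_nonneg_left h5 (by positivity : 0 ≤ b * Real.exp R)
    apply Real.exp_le_exp.2
    linarith
  refine hb1.trans ?_
  rw [intervalIntegral.integral_const_mul]
  calc _ ≤ Real.exp (μ.re * R) * Real.exp (|μ.im| * (Real.pi / 2)) *
        (Real.pi / (2 * (b * Real.exp R))) := by
        gcongr
        exact op_jordan _ (by positivity)
    _ = _ := by
      rw [show -((1 - μ.re) * R) = μ.re * R - R by ring, Real.exp_sub]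
      field_simp

lemma opF_rect (b : ℝ) (μ : ℂ) (R : ℝ) :
    (∫ x in (-R)..R, opF μ b x) -
      Complex.exp (Complex.I * μ * (Real.pi : ℂ) / 2) * (∫ x in (-R)..R, opF μ (I * b) x) +
      I * (∫ t in (0:ℝ)..(Real.pi / 2), opF μ b (R + t * I)) -
      I * (∫ t in (0:ℝ)..(Real.pi / 2), opF μ b ((-R : ℝ) + t * I)) = 0 := by
  have hd : Differentiable ℂ (opF μ b) := by unfold opF; fun_prop
  have h := Complex.integral_boundary_rect_eq_zero_of_differentiableOn (opF μ b)
    ((-R : ℝ) : ℂ) (R + (Real.pi / 2 : ℝ) * I) hd.differentiableOn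
  have e : ∀ x : ℝ, opF μ b (x + ((Real.pi / 2 : ℝ) : ℂ) * I) =
      Complex.exp (Complex.I * μ * (Real.pi : ℂ) / 2) * opF μ (I * b) x := by
    intro x
    have : Complex.exp (((Real.pi / 2 : ℝ) : ℂ) * I) = I := by
      push_cast; exact Complex.exp_pi_div_two_mul_I
    unfold opF
    have h2 : Complex.exp (μ * (x + ((Real.pi / 2 : ℝ) : ℂ) * I)) =
        Complex.exp (Complex.I * μ * (Real.pi : ℂ) / 2) * Complex.exp (μ * x) := by
      rw [← Complex.exp_add]; congr 1; push_cast; ring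
    rw [h2, Complex.exp_add (x : ℂ), this, mul_assoc]
    congr 3
    ring
  simp only [Complex.add_re, Complex.add_im, Complex.ofReal_re, Complex.ofReal_im,
    Complex.re_ofReal_mul, Complex.im_ofReal_mul, Complex.I_re, Complex.I_im, mul_zero, mul_one,
    add_zero, zero_add, e, intervalIntegral.integral_const_mul, smul_eq_mul, Complex.ofReal_zero,
    zero_mul] at h
  exact h

lemma op_minus (b : ℝ) (hb : 0 < b) (μ : ℂ) (h₁ : 0 < μ.re) (h₂ : μ.re < 1) :
    Tendsto (fun M : ℝ => ∫ y in (0 : ℝ)..M,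
        Complex.exp ((μ - 1) * ((Real.log y : ℝ) : ℂ)) *
          Complex.exp (-Complex.I * (b : ℂ) * (y : ℂ)))
      atTop
      (𝓝 (Complex.Gamma μ * Complex.exp (-μ * ((Real.log b : ℝ) : ℂ)) *
        Complex.exp (-Complex.I * μ * (Real.pi : ℂ) / 2))) := by
  have hE : Complex.exp (-Complex.I * μ * (Real.pi : ℂ) / 2) *
      Complex.exp (Complex.I * μ * (Real.pi : ℂ) / 2) = 1 := by
    rw [← Complex.exp_add, ← Complex.exp_zero]; congr 1; ring
  have hA := (opG_gamma b hb μ h₁).sub (opG_diff μ b h₁)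
  have hB := ((hA.add ((opF_right b hb μ h₂).const_mul I)).sub
    ((opF_left b hb μ h₁).const_mul I)).mul_const (Complex.exp (-Complex.I * μ * (Real.pi : ℂ) / 2))
  have hC := hB.add (opG_diff μ (I * b) h₁)
  have hD : Tendsto (fun R : ℝ => ∫ y in (0:ℝ)..(Real.exp R), opG μ (I * b) y) atTop
      (𝓝 (Complex.Gamma μ * Complex.exp (-μ * ((Real.log b : ℝ) : ℂ)) *
        Complex.exp (-Complex.I * μ * (Real.pi : ℂ) / 2))) := by
    convert hC using 2 with R
    · have h := opF_rect b μ R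
      linear_combination (-Complex.exp (-Complex.I * μ * (Real.pi : ℂ) / 2)) * h -
        (∫ x in (-R)..R, opF μ (I * b) x) * hE
    · simp
  refine (hD.comp Real.tendsto_log_atTop).congr' ?_
  filter_upwards [eventually_gt_atTop 0] with M hM
  simp only [Function.comp, Real.exp_log hM, opG, neg_mul]

/-- For `b > 0` and `μ ∈ ℂ` with `0 < Re μ < 1`, the improper integrals
`∫₀^∞ y^{μ-1} e^{±iby} dy` exist and equal `Γ(μ) b^{-μ} e^{±iμπ/2}`, where
`y^{μ-1} = e^{(μ-1) log y}` and `b^{-μ} = e^{-μ log b}` with the real logarithm. -/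
theorem oscillatory_power_integral
    (b : ℝ) (hb : 0 < b) (μ : ℂ) (h₁ : 0 < μ.re) (h₂ : μ.re < 1) :
    Tendsto
      (fun M : ℝ => ∫ y in (0 : ℝ)..M,
        Complex.exp ((μ - 1) * ((Real.log y : ℝ) : ℂ)) *
          Complex.exp (Complex.I * (b : ℂ) * (y : ℂ)))
      atTop
      (𝓝 (Complex.Gamma μ * Complex.exp (-μ * ((Real.log b : ℝ) : ℂ)) *
        Complex.exp (Complex.I * μ * (Real.pi : ℂ) / 2))) ∧
    Tendsto
      (fun M : ℝ => ∫ y in (0 : ℝ)..M,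
        Complex.exp ((μ - 1) * ((Real.log y : ℝ) : ℂ)) *
          Complex.exp (-Complex.I * (b : ℂ) * (y : ℂ)))
      atTop
      (𝓝 (Complex.Gamma μ * Complex.exp (-μ * ((Real.log b : ℝ) : ℂ)) *
        Complex.exp (-Complex.I * μ * (Real.pi : ℂ) / 2))) := by
  refine ⟨?_, op_minus b hb μ h₁ h₂⟩
  have h := op_minus b hb ((starRingEnd ℂ) μ) (by simpa using h₁) (by simpa using h₂)
  have h' := (Complex.continuous_conj.tendsto _).comp h
  convert h' using 1
  · funext M
    simp only [Function.comp, intervalIntegral, map_sub, ← integral_conj, map_mul,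
      ← Complex.exp_conj, map_neg, map_one, Complex.conj_conj, Complex.conj_I,
      Complex.conj_ofReal, neg_neg]
  · simp only [map_mul, ← Complex.exp_conj, Complex.Gamma_conj, map_neg, Complex.conj_conj,
      Complex.conj_I, Complex.conj_ofReal, neg_neg, map_div₀, map_ofNat]

end
end
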